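/- arXiv:2008.04990 — 6 statements merged into one kernel-verified Lean document; each statement's English description precedes it below -/
import Mathlib

section
/- Let S and A be finite nonempty sets and d a positive integer. Suppose the transition kernel of a finite MDP factorizes as P(s'|s,a) = \sum_{i=1}^d P1(i|s,a) P2(s'|i), where each P1(\cdot|s,a) is a probability distribution on {1,...,d} and each P2(\cdot|i) is a probability distribution on S, and suppose the initial distribution satisfies d0(s) = \sum_{i=1}^d w_i P2(s|i) for some probability weights (w_i). Define \mu(s,a) := (1/(d·|A|)) \sum_{i=1}^d P2(s|i). Then \mu is a probability distribution on S × A, and with \mu_S(s) := \sum_a \mu(s,a): (i) d0(s) ≤ d·\mu_S(s) for all s; (ii) P(s'|s,a) ≤ d·\mu_S(s') for all (s,a,s'); and (iii) whenever \mu_S(s) > 0, \mu(s,a)/\mu_S(s) = 1/|A| for every a. In particular, the concentrability assumption holds with C_S ≤ d and C_A ≤ |A|, i.e., C = C_S·C_A ≤ d·|A|. -/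
/-!
The marginal of `μ` on states is the mean of the `d` distributions `P2(·|i)`, so it is again a
distribution and `d·μ_S` is their sum. Probability weights are at most one, hence every mixture of
the `P2(·|i)`, and in particular `d0` and each `P(·|s,a)`, is bounded pointwise by that sum. Since
`μ(s,a)` does not depend on `a`, its conditional distribution on actions is uniform.
-/

open scoped BigOperators

section Mean

variable {ι β 𝕜 : Type*} [Fintype ι]

theorem sum_mul_le_sum_of_mem_stdSimplex [Semiring 𝕜] [PartialOrder 𝕜] [IsOrderedRing 𝕜]
    {w q : ι → 𝕜} (hw : w ∈ stdSimplex 𝕜 ι) (hq : ∀ i, 0 ≤ q i) :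
    ∑ i, w i * q i ≤ ∑ i, q i :=
  Finset.sum_le_sum fun i _ ↦ mul_le_of_le_one_left (hq i) (mem_Icc_of_mem_stdSimplex hw i).2

theorem nonempty_of_mem_stdSimplex [Semiring 𝕜] [PartialOrder 𝕜] [Nontrivial 𝕜]
    {w : ι → 𝕜} (hw : w ∈ stdSimplex 𝕜 ι) : Nonempty ι := by
  by_contra hι
  rw [not_nonempty_iff] at hι
  simp only [stdSimplex_of_isEmpty_index, Set.mem_empty_iff_false] at hw

theorem hasSum_expect [Semifield 𝕜] [CharZero 𝕜] [TopologicalSpace 𝕜] [IsTopologicalSemiring 𝕜]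
    {f : ι → β → 𝕜} {m : ι → 𝕜} (hf : ∀ i, HasSum (f i) (m i)) :
    HasSum (fun b ↦ 𝔼 i, f i b) (𝔼 i, m i) := by
  simp only [Fintype.expect_eq_sum_div_card]
  exact (hasSum_sum fun i _ ↦ hf i).div_const _

end Mean

section DataDist

variable {ι S A : Type*} [Fintype ι] [Fintype A]

/-- The data distribution `μ(s,a) = (1/(d·|A|)) ∑ i, Q(s|i)`, in which the state is drawn from the
uniform mixture of the `d = |ι|` distributions `Q i` and the action independently and uniformly. -/
noncomputable def dataDist (Q : ι → S → ℝ) (s : S) (_a : A) : ℝ :=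
  (1 / ((Fintype.card ι : ℝ) * (Fintype.card A : ℝ))) * ∑ i, Q i s

theorem dataDist_nonneg {Q : ι → S → ℝ} (hQ : ∀ i s, 0 ≤ Q i s) (s : S) (a : A) :
    0 ≤ dataDist Q s a :=
  mul_nonneg (by positivity) (Finset.sum_nonneg fun i _ ↦ hQ i s)

theorem dataDist_eq_expect_div_card (Q : ι → S → ℝ) (s : S) (a : A) :
    dataDist Q s a = (𝔼 i, Q i s) / Fintype.card A := by
  rw [dataDist, Fintype.expect_eq_sum_div_card, div_div, one_div_mul_eq_div]

theorem sum_dataDist_eq_expect [Nonempty A] (Q : ι → S → ℝ) (s : S) :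
    ∑ a : A, dataDist Q s a = 𝔼 i, Q i s := by
  simp only [dataDist_eq_expect_div_card, ← Finset.sum_div, ← Fintype.expect_eq_sum_div_card,
    Fintype.expect_const]

theorem hasSum_sum_dataDist [Nonempty ι] [Nonempty A] {Q : ι → S → ℝ} (hQ : ∀ i, HasSum (Q i) 1) :
    HasSum (fun s ↦ ∑ a : A, dataDist Q s a) 1 := by
  simpa only [sum_dataDist_eq_expect, Fintype.expect_const] using hasSum_expect hQ

theorem sum_mul_le_card_mul_sum_dataDist [Nonempty A] {w : ι → ℝ} {Q : ι → S → ℝ}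
    (hw : w ∈ stdSimplex ℝ ι) (hQ : ∀ i s, 0 ≤ Q i s) (s : S) :
    ∑ i, w i * Q i s ≤ Fintype.card ι * ∑ a : A, dataDist Q s a := by
  rw [sum_dataDist_eq_expect, Fintype.card_mul_expect]
  exact sum_mul_le_sum_of_mem_stdSimplex hw fun i ↦ hQ i s

theorem dataDist_div_sum_dataDist {Q : ι → S → ℝ} {s : S} (hs : ∑ a : A, dataDist Q s a ≠ 0)
    (a : A) : dataDist Q s a / ∑ a' : A, dataDist Q s a' = 1 / Fintype.card A := by
  have : Nonempty A := ⟨a⟩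
  rw [sum_dataDist_eq_expect] at hs ⊢
  rw [dataDist_eq_expect_div_card, div_right_comm, div_self hs]

end DataDist

theorem stmt0_general {ι S A : Type*} [Fintype ι] [Fintype A] [Nonempty A]
    (P : S → A → S → ℝ) (P1 : S → A → ι → ℝ) (P2 : ι → S → ℝ) (d0 : S → ℝ) (w : ι → ℝ)
    (hP1 : ∀ s a, P1 s a ∈ stdSimplex ℝ ι)
    (hP2nn : ∀ i s, 0 ≤ P2 i s) (hP2sum : ∀ i, HasSum (P2 i) 1)
    (hfac : ∀ s a s', P s a s' = ∑ i, P1 s a i * P2 i s')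
    (hw : w ∈ stdSimplex ℝ ι) (hd0 : ∀ s, d0 s = ∑ i, w i * P2 i s)
    (μ : S → A → ℝ) (hμ : ∀ s a, μ s a = dataDist P2 s a)
    (μS : S → ℝ) (hμS : ∀ s, μS s = ∑ a, μ s a) :
    ((∀ s a, 0 ≤ μ s a) ∧ HasSum (fun s ↦ ∑ a, μ s a) 1) ∧
    (∀ s, d0 s ≤ Fintype.card ι * μS s) ∧
    (∀ s a s', P s a s' ≤ Fintype.card ι * μS s') ∧
    (∀ s, 0 < μS s → ∀ a, μ s a / μS s = 1 / Fintype.card A) := by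
  have : Nonempty ι := nonempty_of_mem_stdSimplex hw
  simp only [hd0, hfac, hμS, hμ]
  exact ⟨⟨dataDist_nonneg hP2nn, hasSum_sum_dataDist hP2sum⟩,
    sum_mul_le_card_mul_sum_dataDist hw hP2nn,
    fun s a ↦ sum_mul_le_card_mul_sum_dataDist (hP1 s a) hP2nn,
    fun _ hs ↦ dataDist_div_sum_dataDist hs.ne'⟩

/-- In a low-rank MDP whose transition kernel admits a stochastic
factorization `P(s'|s,a) = ∑ i, P1(i|s,a) * P2(s'|i)` and whose initial distribution
is a mixture of the rows of `P2`, the data distribution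
`μ(s,a) := (1/(d·|A|)) ∑ i, P2(s|i)` is a probability distribution on `S × A` satisfying
the concentrability assumption with `C_S ≤ d` and `C_A ≤ |A|`. -/
theorem stmt0 {S A : Type*} [Fintype S] [Fintype A] [Nonempty S] [Nonempty A]
    (d : ℕ) (hd : 0 < d)
    (P : S → A → S → ℝ) (P1 : S → A → Fin d → ℝ) (P2 : Fin d → S → ℝ)
    (d0 : S → ℝ) (w : Fin d → ℝ)
    (hP1nn : ∀ s a i, 0 ≤ P1 s a i) (hP1sum : ∀ s a, ∑ i, P1 s a i = 1)
    (hP2nn : ∀ i s, 0 ≤ P2 i s) (hP2sum : ∀ i, ∑ s, P2 i s = 1)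
    (hfac : ∀ s a s', P s a s' = ∑ i, P1 s a i * P2 i s')
    (hwnn : ∀ i, 0 ≤ w i) (hwsum : ∑ i, w i = 1)
    (hd0 : ∀ s, d0 s = ∑ i, w i * P2 i s)
    (μ : S → A → ℝ)
    (hμ : ∀ s a, μ s a = (1 / ((d : ℝ) * (Fintype.card A : ℝ))) * ∑ i, P2 i s)
    (μS : S → ℝ) (hμS : ∀ s, μS s = ∑ a, μ s a) :
    -- μ is a probability distribution on S × A
    ((∀ s a, 0 ≤ μ s a) ∧ ∑ s, ∑ a, μ s a = 1) ∧
    -- (i) the initial distribution is covered with constant d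
    (∀ s, d0 s ≤ (d : ℝ) * μS s) ∧
    -- (ii) every next-state distribution is covered with constant d
    (∀ s a s', P s a s' ≤ (d : ℝ) * μS s') ∧
    -- (iii) the conditional action distribution is uniform, hence C_A ≤ |A|
    (∀ s, 0 < μS s → ∀ a, μ s a / μS s = 1 / (Fintype.card A : ℝ)) := by
  obtain ⟨⟨hnn, hsum⟩, hcov⟩ := stmt0_general P P1 P2 d0 w (fun s a ↦ ⟨hP1nn s a, hP1sum s a⟩)
    hP2nn (fun i ↦ hP2sum i ▸ hasSum_fintype (P2 i)) hfac ⟨hwnn, hwsum⟩ hd0 μ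
    (by simpa only [dataDist, Fintype.card_fin] using hμ) μS hμS
  exact ⟨⟨hnn, (hasSum_fintype _).unique hsum⟩, by simpa only [Fintype.card_fin] using hcov⟩
end

section
/- The projected Bellman operator T_φ^μ is a γ-contraction under the sup norm: for all f, f' : S × A → ℝ, ‖T_φ^μ f − T_φ^μ f'‖_∞ ≤ γ ‖f − f'‖_∞. Consequently, T_φ^μ has a unique fixed point. -/
/-!
`T_φ^μ` is the Bellman operator followed by a `μ`-weighted average over each cell of `φ`. The
maximum over actions, the expectation under `P` and the cell averages are all nonexpansive for the
sup norm, so the discount `γ` makes the composite a `γ`-contraction, and the Banach fixed point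
theorem applies.
-/

/-- `V_f(s) := max_a f(s,a)`. -/
noncomputable def Vof {S A : Type*} [Fintype A] [Nonempty A]
    (f : S × A → ℝ) (s : S) : ℝ :=
  Finset.univ.sup' Finset.univ_nonempty (fun a => f (s, a))

/-- The Bellman optimality operator `(T f)(s,a) = R(s,a) + γ ∑ s', P(s'|s,a) V_f(s')`. -/
noncomputable def bellmanT {S A : Type*} [Fintype S] [Fintype A] [Nonempty A]
    (P : S → A → S → ℝ) (R : S → A → ℝ) (γ : ℝ) (f : S × A → ℝ) : S × A → ℝ :=
  fun q => R q.1 q.2 + γ * ∑ s', P q.1 q.2 s' * Vof f s'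

/-- The projected Bellman operator `T_φ^μ`, which averages `T f` over each
aggregation cell with weights proportional to `μ`. -/
noncomputable def projT {S A X : Type*} [Fintype S] [Fintype A] [Nonempty A]
    [DecidableEq X]
    (P : S → A → S → ℝ) (R : S → A → ℝ) (γ : ℝ)
    (μ : S × A → ℝ) (φ : S × A → X) (f : S × A → ℝ) : S × A → ℝ :=
  fun q => (∑ q', if φ q' = φ q then μ q' * bellmanT P R γ f q' else 0)
         / (∑ q', if φ q' = φ q then μ q' else 0)

/-- `‖f‖_∞ = max_{s,a} |f(s,a)|`. -/
noncomputable def supNorm {S A : Type*} [Fintype S] [Fintype A] [Nonempty S] [Nonempty A]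
    (f : S × A → ℝ) : ℝ :=
  Finset.univ.sup' Finset.univ_nonempty (fun q => |f q|)

open Finset NNReal

theorem abs_sup'_sub_sup'_le {ι M : Type*} [AddCommGroup M] [LinearOrder M] [IsOrderedAddMonoid M]
    {s : Finset ι} (hs : s.Nonempty) {f g : ι → M} {c : M} (h : ∀ i ∈ s, |f i - g i| ≤ c) :
    |s.sup' hs f - s.sup' hs g| ≤ c := by
  have sup'_sub_le {f g : ι → M} (h : ∀ i ∈ s, f i - g i ≤ c) :
      s.sup' hs f - s.sup' hs g ≤ c :=
    sub_le_iff_le_add.2 <| sup'_le hs f fun i hi =>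
      (sub_le_iff_le_add.1 (h i hi)).trans (add_le_add_right (le_sup' g hi) c)
  exact abs_sub_le_iff.2
    ⟨sup'_sub_le fun i hi => (abs_sub_le_iff.1 (h i hi)).1,
      sup'_sub_le fun i hi => (abs_sub_le_iff.1 (h i hi)).2⟩

section WeightedAverages

variable {ι X E : Type*} [SeminormedAddCommGroup E] [NormedSpace ℝ E]

theorem norm_sum_smul_le_norm_of_sum_le_one [Fintype ι] {w : ι → ℝ} (hw₀ : ∀ i, 0 ≤ w i)
    (hw₁ : ∑ i, w i ≤ 1) (z : ι → E) : ‖∑ i, w i • z i‖ ≤ ‖z‖ :=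
  calc ‖∑ i, w i • z i‖
      ≤ ∑ i, w i * ‖z‖ := norm_sum_le_of_le _ fun i _ => by
        rw [norm_smul, Real.norm_of_nonneg (hw₀ i)]
        exact mul_le_mul_of_nonneg_left (norm_le_pi_norm z i) (hw₀ i)
    _ = (∑ i, w i) * ‖z‖ := (sum_mul ..).symm
    _ ≤ ‖z‖ := mul_le_of_le_one_left (norm_nonneg z) hw₁

theorem dist_centerMass_le {s : Finset ι} {w : ι → ℝ} (hw₀ : ∀ i ∈ s, 0 ≤ w i)
    (hw : 0 < ∑ i ∈ s, w i) {y z : ι → E} {c : ℝ} (h : ∀ i ∈ s, dist (y i) (z i) ≤ c) :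
    dist (s.centerMass w y) (s.centerMass w z) ≤ c := by
  have centerMass_sub : s.centerMass w y - s.centerMass w z = s.centerMass w (y - z) := by
    simp only [centerMass, Pi.sub_apply, smul_sub, sum_sub_distrib]
  rw [dist_eq_norm, centerMass_sub, ← mem_closedBall_zero_iff]
  refine (convex_closedBall 0 c).centerMass_mem hw₀ hw fun i hi => ?_
  simpa only [mem_closedBall_zero_iff, Pi.sub_apply, ← dist_eq_norm] using h i hi

variable [Fintype ι] [DecidableEq X]

/-- The projection onto the functions constant on the cells of `φ`, which replaces `g` on each cell
by its `μ`-weighted average; it turns the Bellman operator `T` into `T_φ^μ`. On a cell of total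
weight `0` the value is `0`. -/
noncomputable def cellAverage (μ : ι → ℝ) (φ : ι → X) (g : ι → E) : ι → E :=
  fun i => ({j | φ j = φ i} : Finset ι).centerMass μ g

theorem lipschitzWith_cellAverage {μ : ι → ℝ} {φ : ι → X} (hμ₀ : ∀ i, 0 ≤ μ i)
    (hμ : ∀ i, 0 < ∑ j with φ j = φ i, μ j) :
    LipschitzWith 1 (cellAverage μ φ : (ι → E) → ι → E) :=
  LipschitzWith.mk_one fun g g' => (dist_pi_le_iff dist_nonneg).2 fun i =>
    dist_centerMass_le (fun j _ => hμ₀ j) (hμ i) fun j _ => dist_le_pi_dist g g' j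

end WeightedAverages

section Bellman

variable {S A X : Type*} [Fintype S] [Fintype A] [Nonempty A]

theorem lipschitzWith_Vof : LipschitzWith 1 (Vof : (S × A → ℝ) → S → ℝ) :=
  LipschitzWith.mk_one fun f g => (dist_pi_le_iff dist_nonneg).2 fun s =>
    abs_sup'_sub_sup'_le univ_nonempty fun a _ => dist_le_pi_dist f g (s, a)

theorem lipschitzWith_bellmanT {P : S → A → S → ℝ} (hP₀ : ∀ s a s', 0 ≤ P s a s')
    (hP₁ : ∀ s a, ∑ s', P s a s' ≤ 1) (R : S → A → ℝ) (γ : ℝ≥0) :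
    LipschitzWith γ (bellmanT P R γ) := by
  refine LipschitzWith.of_dist_le_mul fun f g =>
    (dist_pi_le_iff (by positivity)).2 fun ⟨s, a⟩ => ?_
  have expectation_le : ‖∑ s', P s a s' • (Vof f - Vof g) s'‖ ≤ dist f g :=
    calc ‖∑ s', P s a s' • (Vof f - Vof g) s'‖
        ≤ ‖Vof f - Vof g‖ := norm_sum_smul_le_norm_of_sum_le_one (hP₀ s a) (hP₁ s a) _
      _ = dist (Vof f) (Vof g) := (dist_eq_norm _ _).symm
      _ ≤ dist f g := lipschitzWith_Vof.dist_le_mul f g |>.trans_eq (one_mul _)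
  calc dist (bellmanT P R γ f (s, a)) (bellmanT P R γ g (s, a))
      = ‖(γ : ℝ) * ∑ s', P s a s' • (Vof f - Vof g) s'‖ := by
        simp only [bellmanT, Pi.sub_apply, smul_eq_mul, mul_sub, sum_sub_distrib,
          dist_eq_norm, add_sub_add_left_eq_sub]
    _ = γ * ‖∑ s', P s a s' • (Vof f - Vof g) s'‖ := by
        rw [norm_mul, NNReal.norm_eq]
    _ ≤ γ * dist f g := mul_le_mul_of_nonneg_left expectation_le γ.2

theorem projT_eq_cellAverage_comp_bellmanT [DecidableEq X] (P : S → A → S → ℝ) (R : S → A → ℝ)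
    (γ : ℝ) (μ : S × A → ℝ) (φ : S × A → X) :
    projT P R γ μ φ = cellAverage μ φ ∘ bellmanT P R γ := by
  funext f q
  simp only [projT, Function.comp_apply, cellAverage, centerMass, sum_filter, smul_eq_mul,
    div_eq_inv_mul]

theorem lipschitzWith_projT [DecidableEq X] {P : S → A → S → ℝ} (hP₀ : ∀ s a s', 0 ≤ P s a s')
    (hP₁ : ∀ s a, ∑ s', P s a s' ≤ 1) (R : S → A → ℝ) (γ : ℝ≥0) {μ : S × A → ℝ} {φ : S × A → X}
    (hμ₀ : ∀ q, 0 ≤ μ q) (hμ : ∀ q, 0 < ∑ q' with φ q' = φ q, μ q') :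
    LipschitzWith γ (projT P R γ μ φ) := by
  rw [projT_eq_cellAverage_comp_bellmanT]
  simpa only [one_mul] using
    (lipschitzWith_cellAverage hμ₀ hμ).comp (lipschitzWith_bellmanT hP₀ hP₁ R γ)

theorem supNorm_sub_eq_dist [Nonempty S] (f g : S × A → ℝ) :
    supNorm (fun q => f q - g q) = dist f g :=
  le_antisymm (sup'_le _ _ fun q _ => dist_le_pi_dist f g q)
    (dist_pi_le_iff'.2 fun q => le_sup' (fun q => |f q - g q|) (mem_univ q))

end Bellman

theorem stmt2_general {S A X : Type*} [Fintype S] [Fintype A] [Nonempty S] [Nonempty A]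
    [DecidableEq X]
    (P : S → A → S → ℝ) (R : S → A → ℝ) (γ : ℝ)
    (hP₀ : ∀ s a s', 0 ≤ P s a s') (hP₁ : ∀ s a, ∑ s', P s a s' ≤ 1)
    (hγ₀ : 0 ≤ γ) (hγ₁ : γ < 1)
    (μ : S × A → ℝ) (φ : S × A → X)
    (hμ₀ : ∀ q, 0 ≤ μ q) (hμ : ∀ q, 0 < ∑ q' with φ q' = φ q, μ q') :
    (∀ f f' : S × A → ℝ,
      supNorm (fun q => projT P R γ μ φ f q - projT P R γ μ φ f' q)
        ≤ γ * supNorm (fun q => f q - f' q)) ∧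
    (∃! f : S × A → ℝ, projT P R γ μ φ f = f) := by
  lift γ to ℝ≥0 using hγ₀
  have contracting : ContractingWith γ (projT P R γ μ φ) :=
    ⟨by exact_mod_cast hγ₁, lipschitzWith_projT hP₀ hP₁ R γ hμ₀ hμ⟩
  refine ⟨fun f f' => ?_, contracting.fixedPoint, contracting.fixedPoint_isFixedPt,
    fun _ => contracting.fixedPoint_unique⟩
  simpa only [supNorm_sub_eq_dist] using contracting.dist_le_mul f f'

/-- The projected Bellman operator `T_φ^μ` is a `γ`-contraction
under the sup norm; consequently it has a unique fixed point. -/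
theorem stmt2 {S A X : Type*} [Fintype S] [Fintype A] [Nonempty S] [Nonempty A]
    [DecidableEq X]
    (P : S → A → S → ℝ) (R : S → A → ℝ) (Rmax γ : ℝ)
    (hP0 : ∀ s a s', 0 ≤ P s a s') (hP1 : ∀ s a, ∑ s', P s a s' = 1)
    (hR : ∀ s a, 0 ≤ R s a ∧ R s a ≤ Rmax)
    (hγ0 : 0 ≤ γ) (hγ1 : γ < 1)
    (μ : S × A → ℝ) (hμpos : ∀ q, 0 < μ q) (hμsum : ∑ q, μ q = 1)
    (φ : S × A → X) :
    (∀ f f' : S × A → ℝ,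
      supNorm (fun q => projT P R γ μ φ f q - projT P R γ μ φ f' q)
        ≤ γ * supNorm (fun q => f q - f' q)) ∧
    (∃! f : S × A → ℝ, projT P R γ μ φ f = f) :=
  stmt2_general P R γ hP0 (fun s a => (hP1 s a).le) hγ0 hγ1 μ φ (fun q => (hμpos q).le)
    fun q => sum_pos (fun q' _ => hμpos q') ⟨q, mem_filter_univ q |>.2 rfl⟩
end

section
/- Consider an uncontrolled finite Markov chain: S a finite nonempty set and P a row-stochastic S × S matrix (P(s'|s) ≥ 0, \sum_{s'} P(s'|s) = 1). Let μ be a probability distribution on S with μ(s) > 0 for all s that is invariant, i.e., \sum_s μ(s) P(s'|s) = μ(s') for all s'. For any state aggregation φ : S → X, define P_φ(s'|s) := (\sum_{s̃ : φ(s̃) = φ(s)} μ(s̃) P(s'|s̃)) / (\sum_{s̃ : φ(s̃) = φ(s)} μ(s̃)). Then μ is also invariant for the aggregated chain: \sum_s μ(s) P_φ(s'|s) = μ(s') for all s'. -/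
/-!
The kernel `P_φ` is the conditional expectation of `P` given the cluster `φ s`, with respect to `μ`.
By the tower property, averaging `P_φ · s'` against `μ` gives the same result as averaging `P · s'`,
namely `μ s'` by invariance.
-/

section Aggregation

variable {S X : Type*} [Fintype S] [DecidableEq X]

/-- The total of `f` over the cluster of states that the aggregation `φ` sends to `x`; for a
distribution `f`, this is its push-forward along `φ`. -/
def clusterSum {M : Type*} [AddCommMonoid M] (φ : S → X) (f : S → M) (x : X) : M :=
  ∑ s with φ s = x, f s

theorem sum_image_clusterSum {M : Type*} [AddCommMonoid M] (φ : S → X) (f : S → M) :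
    ∑ x ∈ Finset.univ.image φ, clusterSum φ f x = ∑ s, f s :=
  Finset.sum_fiberwise_of_maps_to (fun s _ ↦ Finset.mem_image_of_mem φ (Finset.mem_univ s)) f

theorem eq_zero_of_clusterSum_eq_zero {M : Type*} [AddCommMonoid M] [PartialOrder M]
    [IsOrderedAddMonoid M] {φ : S → X} {μ : S → M} (hμ : ∀ s, 0 ≤ μ s) {s : S}
    (h : clusterSum φ μ (φ s) = 0) : μ s = 0 :=
  (Finset.sum_eq_zero_iff_of_nonneg fun t _ ↦ hμ t).mp h s (by simp)

theorem clusterSum_mul_comp {R : Type*} [NonUnitalNonAssocSemiring R] (φ : S → X) (μ : S → R)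
    (g : X → R) (x : X) :
    clusterSum φ (fun s ↦ μ s * g (φ s)) x = clusterSum φ μ x * g x := by
  rw [clusterSum, clusterSum, Finset.sum_mul]
  refine Finset.sum_congr rfl fun s hs ↦ ?_
  rw [(Finset.mem_filter.mp hs).2]

variable {K : Type*} [Semifield K]

/-- The conditional expectation of `f` given the cluster `x`, under the weights `μ`. It has the junk
value `0` on a cluster of total weight `0`. -/
def clusterMean (φ : S → X) (μ f : S → K) (x : X) : K :=
  clusterSum φ (fun s ↦ μ s * f s) x / clusterSum φ μ x

theorem clusterSum_mul_clusterMean {φ : S → X} {μ : S → K}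
    (hμ : ∀ s, clusterSum φ μ (φ s) = 0 → μ s = 0) (f : S → K) (x : X) :
    clusterSum φ μ x * clusterMean φ μ f x = clusterSum φ (fun s ↦ μ s * f s) x := by
  refine mul_div_cancel_of_imp' fun hx ↦ Finset.sum_eq_zero fun s hs ↦ ?_
  obtain rfl : φ s = x := (Finset.mem_filter.mp hs).2
  rw [hμ s hx, zero_mul]

theorem sum_mul_clusterMean {φ : S → X} {μ : S → K}
    (hμ : ∀ s, clusterSum φ μ (φ s) = 0 → μ s = 0) (f : S → K) :
    ∑ s, μ s * clusterMean φ μ f (φ s) = ∑ s, μ s * f s :=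
  calc
    ∑ s, μ s * clusterMean φ μ f (φ s)
      = ∑ x ∈ Finset.univ.image φ, clusterSum φ (fun s ↦ μ s * clusterMean φ μ f (φ s)) x :=
        (sum_image_clusterSum φ _).symm
    _ = ∑ x ∈ Finset.univ.image φ, clusterSum φ (fun s ↦ μ s * f s) x := by
        simp only [clusterSum_mul_comp, clusterSum_mul_clusterMean hμ]
    _ = ∑ s, μ s * f s := sum_image_clusterSum φ _

end Aggregation

theorem stmt5_general {S T X K : Type*} [Fintype S] [DecidableEq X] [Semifield K]
    (P : S → T → K) (μ : S → K) (φ : S → X)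
    (hμ : ∀ s, clusterSum φ μ (φ s) = 0 → μ s = 0)
    (Pφ : S → T → K)
    (hPφ : ∀ s s', Pφ s s' =
      (∑ t, if φ t = φ s then μ t * P t s' else 0)
        / (∑ t, if φ t = φ s then μ t else 0)) (s' : T) :
    ∑ s, μ s * Pφ s s' = ∑ s, μ s * P s s' := by
  have hmean : ∀ s, Pφ s s' = clusterMean φ μ (P · s') (φ s) := fun s ↦ by
    rw [hPφ, clusterMean, clusterSum, clusterSum, Finset.sum_filter, Finset.sum_filter]
  simp only [hmean, sum_mul_clusterMean hμ]

/-- For an uncontrolled finite Markov chain with row-stochastic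
kernel `P` and a fully-supported invariant distribution `μ`, the distribution `μ`
remains invariant for the aggregated chain `P_φ`, for any state aggregation `φ`. -/
theorem stmt5 {S X : Type*} [Fintype S] [Nonempty S] [DecidableEq X]
    (P : S → S → ℝ)
    (hP0 : ∀ s s', 0 ≤ P s s') (hP1 : ∀ s, ∑ s', P s s' = 1)
    (μ : S → ℝ) (hμpos : ∀ s, 0 < μ s) (hμsum : ∑ s, μ s = 1)
    (hinv : ∀ s', ∑ s, μ s * P s s' = μ s')
    (φ : S → X)
    (Pφ : S → S → ℝ)
    (hPφ : ∀ s s', Pφ s s' =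
      (∑ t, if φ t = φ s then μ t * P t s' else 0)
        / (∑ t, if φ t = φ s then μ t else 0)) :
    ∀ s', ∑ s, μ s * Pφ s s' = μ s' := by
  intro s'
  rw [stmt5_general P μ φ (fun _ ↦ eq_zero_of_clusterSum_eq_zero fun s ↦ (hμpos s).le) Pφ hPφ, hinv]
end

section
/- Let (Ω, 𝔽, ℙ) be a probability space, 𝒳 a measurable space, X : Ω → 𝒳 measurable, and Y : Ω → ℝ a random variable with 0 ≤ Y ≤ V almost surely for some constant V > 0. Let h, h⋆ : 𝒳 → [0, V] be measurable, with h⋆ ∘ X being a version of the conditional expectation E[Y | σ(X)]. Define Z := (h(X) − Y)² − (h⋆(X) − Y)². Then (i) E[Z] = E[(h(X) − h⋆(X))²], and (ii) E[Z²] ≤ 4 V² E[Z]; in particular Var[Z] ≤ 4 V² E[Z]. -/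
open MeasureTheory

/-!
The integrand factors as `Z = (f - g) * (f + g - 2 * Y)` and splits as
`Z = (f - g) ^ 2 + 2 * (f - g) * (g - Y)`, where `f = h ∘ X` and `g = h⋆ ∘ X`. The cross term has
mean zero, because `g - Y` is orthogonal to every square-integrable `σ(X)`-measurable function; this
gives (i). Bounding the second factor of the product by `2 * V` in absolute value gives
`Z ^ 2 ≤ 4 * V ^ 2 * (f - g) ^ 2`, and (i) turns this into (ii).
-/

section ExcessSqLoss

variable {Ω : Type*} {m m₀ : MeasurableSpace Ω} {μ : Measure Ω} {f g Y : Ω → ℝ} {C : ℝ}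

/-- The excess squared loss of the predictor `f` over the predictor `g` for the response `Y`,
i.e. the random variable `Z`. Predictors are functions on the sample space (`h ∘ X` rather
than `h`), so that the information available to them can be any sub-σ-algebra. -/
def excessSqLoss (f g Y : Ω → ℝ) (ω : Ω) : ℝ :=
  (f ω - Y ω) ^ 2 - (g ω - Y ω) ^ 2

theorem excessSqLoss_eq_mul (f g Y : Ω → ℝ) (ω : Ω) :
    excessSqLoss f g Y ω = (f ω - g ω) * (f ω + g ω - 2 * Y ω) := by
  unfold excessSqLoss
  ring

theorem excessSqLoss_eq_sq_add (f g Y : Ω → ℝ) (ω : Ω) :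
    excessSqLoss f g Y ω = (f ω - g ω) ^ 2 + 2 * ((f ω - g ω) * (g ω - Y ω)) := by
  unfold excessSqLoss
  ring

theorem aestronglyMeasurable_excessSqLoss (hf : AEStronglyMeasurable f μ)
    (hg : AEStronglyMeasurable g μ) (hY : AEStronglyMeasurable Y μ) :
    AEStronglyMeasurable (excessSqLoss f g Y) μ :=
  ((hf.sub hY).pow 2).sub ((hg.sub hY).pow 2)

theorem integral_mul_condExp (hm : m ≤ m₀) [SigmaFinite (μ.trim hm)]
    (hf : AEStronglyMeasurable[m] f μ) (hfY : Integrable (f * Y) μ) (hY : Integrable Y μ) :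
    ∫ ω, f ω * (μ[Y | m]) ω ∂μ = ∫ ω, f ω * Y ω ∂μ :=
  calc ∫ ω, f ω * (μ[Y | m]) ω ∂μ
    _ = ∫ ω, (μ[f * Y | m]) ω ∂μ :=
      integral_congr_ae (condExp_mul_of_aestronglyMeasurable_left hf hfY hY).symm
    _ = ∫ ω, f ω * Y ω ∂μ := integral_condExp hm

theorem integral_mul_sub_eq_zero_of_ae_eq_condExp (hm : m ≤ m₀) [SigmaFinite (μ.trim hm)]
    (hf : AEStronglyMeasurable[m] f μ) (hf2 : MemLp f 2 μ) (hY : Integrable Y μ)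
    (hY2 : MemLp Y 2 μ) (hg : g =ᵐ[μ] μ[Y | m]) :
    ∫ ω, f ω * (g ω - Y ω) ∂μ = 0 := by
  have hfY : Integrable (f * Y) μ := hf2.integrable_mul hY2
  have hfE : Integrable (f * μ[Y | m]) μ := hf2.integrable_mul (hY2.condExp one_le_two)
  calc ∫ ω, f ω * (g ω - Y ω) ∂μ
    _ = ∫ ω, (f ω * (μ[Y | m]) ω - f ω * Y ω) ∂μ := by
      refine integral_congr_ae ?_
      filter_upwards [hg] with ω hgω
      rw [hgω, mul_sub]
    _ = ∫ ω, f ω * (μ[Y | m]) ω ∂μ - ∫ ω, f ω * Y ω ∂μ := integral_sub hfE hfY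
    _ = 0 := sub_eq_zero.2 (integral_mul_condExp hm hf hfY hY)

theorem integral_excessSqLoss_of_ae_eq_condExp (hm : m ≤ m₀) [SigmaFinite (μ.trim hm)]
    (hf : AEStronglyMeasurable[m] f μ) (hf2 : MemLp f 2 μ) (hY : Integrable Y μ)
    (hY2 : MemLp Y 2 μ) (hg : g =ᵐ[μ] μ[Y | m]) :
    ∫ ω, excessSqLoss f g Y ω ∂μ = ∫ ω, (f ω - g ω) ^ 2 ∂μ := by
  have hg2 : MemLp g 2 μ := (memLp_congr_ae hg).2 (hY2.condExp one_le_two)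
  have hfg : AEStronglyMeasurable[m] (f - g) μ :=
    hf.sub (stronglyMeasurable_condExp.aestronglyMeasurable.congr hg.symm)
  have hfg2 : MemLp (f - g) 2 μ := hf2.sub hg2
  have hsq : Integrable (fun ω => (f ω - g ω) ^ 2) μ := hfg2.integrable_sq
  have hcross : Integrable (fun ω => (f ω - g ω) * (g ω - Y ω)) μ :=
    hfg2.integrable_mul (hg2.sub hY2)
  have horth : ∫ ω, (f ω - g ω) * (g ω - Y ω) ∂μ = 0 :=
    integral_mul_sub_eq_zero_of_ae_eq_condExp hm hfg hfg2 hY hY2 hg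
  calc ∫ ω, excessSqLoss f g Y ω ∂μ
    _ = ∫ ω, ((f ω - g ω) ^ 2 + 2 * ((f ω - g ω) * (g ω - Y ω))) ∂μ := by
      simp only [excessSqLoss_eq_sq_add]
    _ = ∫ ω, (f ω - g ω) ^ 2 ∂μ + 2 * ∫ ω, (f ω - g ω) * (g ω - Y ω) ∂μ := by
      rw [integral_add hsq (hcross.const_mul 2), integral_const_mul]
    _ = ∫ ω, (f ω - g ω) ^ 2 ∂μ := by rw [horth, mul_zero, add_zero]

theorem integral_excessSqLoss_sq_le (hfg : MemLp (f - g) 2 μ)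
    (hC : ∀ᵐ ω ∂μ, |f ω + g ω - 2 * Y ω| ≤ C) :
    ∫ ω, excessSqLoss f g Y ω ^ 2 ∂μ ≤ C ^ 2 * ∫ ω, (f ω - g ω) ^ 2 ∂μ := by
  rw [← integral_const_mul]
  refine integral_mono_of_nonneg (ae_of_all _ fun ω => sq_nonneg _)
    (hfg.integrable_sq.const_mul _) ?_
  filter_upwards [hC] with ω hCω
  calc excessSqLoss f g Y ω ^ 2
    _ = (f ω + g ω - 2 * Y ω) ^ 2 * (f ω - g ω) ^ 2 := by
      rw [excessSqLoss_eq_mul, mul_pow, mul_comm]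
    _ ≤ C ^ 2 * (f ω - g ω) ^ 2 :=
      mul_le_mul_of_nonneg_right (sq_le_sq.2 (hCω.trans (le_abs_self C))) (sq_nonneg _)

theorem integral_sub_integral_sq_le [IsProbabilityMeasure μ] (hf : AEStronglyMeasurable f μ) :
    ∫ ω, (f ω - ∫ ω', f ω' ∂μ) ^ 2 ∂μ ≤ ∫ ω, f ω ^ 2 ∂μ := by
  rw [← ProbabilityTheory.variance_eq_integral hf.aemeasurable]
  exact ProbabilityTheory.variance_le_expectation_sq hf

theorem stmt8_general [IsProbabilityMeasure μ] (hm : m ≤ m₀) (hf : AEStronglyMeasurable[m] f μ)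
    (hY : MemLp Y 2 μ) (hg : g =ᵐ[μ] μ[Y | m]) (hC : ∀ᵐ ω ∂μ, |f ω + g ω - 2 * Y ω| ≤ C) :
    (∫ ω, excessSqLoss f g Y ω ∂μ) = ∫ ω, (f ω - g ω) ^ 2 ∂μ ∧
    (∫ ω, excessSqLoss f g Y ω ^ 2 ∂μ) ≤ C ^ 2 * ∫ ω, excessSqLoss f g Y ω ∂μ ∧
    (∫ ω, (excessSqLoss f g Y ω - ∫ ω', excessSqLoss f g Y ω' ∂μ) ^ 2 ∂μ) ≤
      C ^ 2 * ∫ ω, excessSqLoss f g Y ω ∂μ := by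
  have hg2 : MemLp g 2 μ := (memLp_congr_ae hg).2 (hY.condExp one_le_two)
  have hf0 : AEStronglyMeasurable f μ := hf.mono hm
  have hf2 : MemLp f 2 μ := by
    have hsum : MemLp (f + g - (2 : ℝ) • Y) 2 μ :=
      MemLp.of_bound ((hf0.add hg2.1).sub (hY.1.const_smul (2 : ℝ))) C (by simpa using hC)
    convert (hsum.sub hg2).add (hY.const_smul (2 : ℝ)) using 1
    module
  have hmean := integral_excessSqLoss_of_ae_eq_condExp hm hf hf2 (hY.integrable one_le_two) hY hg
  have hsq : ∫ ω, excessSqLoss f g Y ω ^ 2 ∂μ ≤ C ^ 2 * ∫ ω, excessSqLoss f g Y ω ∂μ :=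
    hmean ▸ integral_excessSqLoss_sq_le (hf2.sub hg2) hC
  exact ⟨hmean, hsq,
    (integral_sub_integral_sq_le (aestronglyMeasurable_excessSqLoss hf0 hg2.1 hY.1)).trans hsq⟩

end ExcessSqLoss

/-- For a bounded regression problem, with `h⋆ ∘ X` a version of the
conditional expectation `E[Y | σ(X)]` and
`Z := (h(X) − Y)² − (h⋆(X) − Y)²`, one has
(i) `E[Z] = E[(h(X) − h⋆(X))²]`, and (ii) `E[Z²] ≤ 4V² E[Z]`;
in particular `Var[Z] ≤ 4V² E[Z]`. -/
theorem stmt8 {Ω 𝓧 : Type*} [MeasurableSpace Ω] [MeasurableSpace 𝓧]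
    (ℙ : Measure Ω) [IsProbabilityMeasure ℙ]
    (X : Ω → 𝓧) (hX : Measurable X)
    (Y : Ω → ℝ) (hY : Measurable Y)
    (V : ℝ) (hV : 0 < V)
    (hYb : ∀ᵐ ω ∂ℙ, 0 ≤ Y ω ∧ Y ω ≤ V)
    (h hstar : 𝓧 → ℝ) (hh : Measurable h) (hhs : Measurable hstar)
    (hhb : ∀ x, 0 ≤ h x ∧ h x ≤ V) (hhsb : ∀ x, 0 ≤ hstar x ∧ hstar x ≤ V)
    -- `h⋆ ∘ X` is a version of the conditional expectation `E[Y | σ(X)]`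
    (hce : (fun ω => hstar (X ω)) =ᵐ[ℙ] ℙ[Y | MeasurableSpace.comap X ‹MeasurableSpace 𝓧›])
    (Z : Ω → ℝ)
    (hZ : ∀ ω, Z ω = (h (X ω) - Y ω) ^ 2 - (hstar (X ω) - Y ω) ^ 2) :
    -- (i)
    (∫ ω, Z ω ∂ℙ) = ∫ ω, (h (X ω) - hstar (X ω)) ^ 2 ∂ℙ ∧
    -- (ii)
    (∫ ω, (Z ω) ^ 2 ∂ℙ) ≤ 4 * V ^ 2 * ∫ ω, Z ω ∂ℙ ∧
    -- in particular, Var[Z] ≤ 4V² E[Z]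
    (∫ ω, (Z ω - ∫ ω', Z ω' ∂ℙ) ^ 2 ∂ℙ) ≤ 4 * V ^ 2 * ∫ ω, Z ω ∂ℙ := by
  obtain rfl : Z = excessSqLoss (h ∘ X) (hstar ∘ X) Y := funext hZ
  have hY2 : MemLp Y 2 ℙ := memLp_of_bounded hYb hY.aestronglyMeasurable 2
  have hbound : ∀ᵐ ω ∂ℙ, |h (X ω) + hstar (X ω) - 2 * Y ω| ≤ 2 * V := by
    filter_upwards [hYb] with ω hYω
    have hhω := hhb (X ω)
    have hsω := hhsb (X ω)
    exact abs_le.2 ⟨by linarith, by linarith⟩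
  rw [show 4 * V ^ 2 = (2 * V) ^ 2 by ring]
  exact stmt8_general hX.comap_le
    (hh.comp (comap_measurable X)).aestronglyMeasurable hY2 hce hbound
end

section
/- Let D = ((s₁,a₁,r₁,s'₁), …, (sₙ,aₙ,rₙ,s'ₙ)) be n i.i.d. tuples with (sᵢ,aᵢ) ∼ μ, rᵢ = R(sᵢ,aᵢ), and s'ᵢ ∼ P(·|sᵢ,aᵢ). Fix f : S × A → [0, V_max], δ ∈ (0,1), and 0 < ε̃ ≤ V_max. Let |φ| denote the number of nonempty aggregation cells of φ, and let T̂_φ^μ f be any function on S × A that, on every cell containing at least one datapoint, equals the average of rᵢ + γ V_f(s'ᵢ) over the datapoints (sᵢ,aᵢ) in that cell, and takes an arbitrary value in [0, V_max] on cells containing no datapoint. If n ≥ 16 V_max² (|φ| log(16 V_max²/ε̃²) + log(2/δ)) / ε̃², then with probability at least 1 − δ/2, ‖T̂_φ^μ f − T_φ^μ f‖_{2,μ} ≤ ε̃. -/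
open MeasureTheory

/-- A function is piecewise constant with respect to an aggregation `φ` if it is
constant on each aggregation cell; `G_φ` is the class of such functions. -/
def PiecewiseConst {S A X : Type*} (φ : S × A → X) (g : S × A → ℝ) : Prop :=
  ∀ q q' : S × A, φ q = φ q' → g q = g q'

/-!
Round the cellwise error of the empirical means towards zero on a grid of mesh `ε / 4`, using the
error bound `V` as the error on cells without sample points. The rounded error `u` satisfies
`u * (e - u) ≥ 0` for the true error `e`, and the residuals of the empirical means are orthogonal
to cellwise constants, so the population residuals `Z` satisfy `∑ i, u * (Z - u) ≥ 0` on the sample.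
On the other hand `exp (u * (Z - u) / (4 * V ^ 2))` has mean at most `exp (-‖u‖² / (8 * V ^ 2))`,
so Chernoff's bound and a union over the grid functions show that, off an event of small
probability, such a sum is nonnegative only if `‖u‖² ≤ ε ^ 2 / 2`. Rounding back,
`‖e‖² ≤ 3 / 2 * ‖u‖² + 3 * (ε / 4) ^ 2 ≤ ε ^ 2`.
-/

open scoped Finset

section UnionBound

variable {Ω ι : Type*} [MeasurableSpace Ω] [Fintype ι] {ρ : Measure Ω} [IsProbabilityMeasure ρ]

lemma measureReal_pi_le_sum_le_exp_neg {g : Ω → ℝ}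
    (hint : Integrable (fun ω => Real.exp (g ω)) ρ) (hg : ∫ ω, Real.exp (g ω) ∂ρ ≤ 1) (L : ℝ) :
    (Measure.pi fun _ : ι => ρ).real {D | L ≤ ∑ i, g (D i)} ≤ Real.exp (-L) := by
  have hintPi : Integrable (fun D : ι → Ω => Real.exp (1 * ∑ i, g (D i)))
      (Measure.pi fun _ => ρ) := by
    simpa only [one_mul, Real.exp_sum] using Integrable.fintype_prod fun _ => hint
  have hmgf : ProbabilityTheory.mgf (fun D : ι → Ω => ∑ i, g (D i))
      (Measure.pi fun _ => ρ) 1 ≤ 1 := by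
    simp only [ProbabilityTheory.mgf, one_mul, Real.exp_sum]
    rw [integral_fintype_prod_eq_pow fun ω => Real.exp (g ω)]
    exact pow_le_one₀ (integral_nonneg fun ω => (Real.exp_pos _).le) hg
  refine (ProbabilityTheory.measure_ge_le_exp_mul_mgf L zero_le_one hintPi).trans ?_
  rw [neg_one_mul]
  exact mul_le_of_le_one_right (Real.exp_pos _).le hmgf

lemma ofReal_one_sub_le_measure_pi_forall_sum_le {W : Type*} (s : Finset W) {g : W → Ω → ℝ}
    (hint : ∀ w ∈ s, Integrable (fun ω => Real.exp (g w ω)) ρ)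
    (hg : ∀ w ∈ s, ∫ ω, Real.exp (g w ω) ∂ρ ≤ 1) {L δ : ℝ} (hs : #s * Real.exp (-L) ≤ δ) :
    ENNReal.ofReal (1 - δ) ≤
      (Measure.pi fun _ : ι => ρ) {D | ∀ w ∈ s, ∑ i, g w (D i) ≤ L} := by
  set Q := Measure.pi fun _ : ι => ρ
  set good : Set (ι → Ω) := {D | ∀ w ∈ s, ∑ i, g w (D i) ≤ L}
  have hsub : goodᶜ ⊆ ⋃ w ∈ s, {D | L ≤ ∑ i, g w (D i)} := by
    intro D hD
    obtain ⟨w, hw, hlt⟩ : ∃ w ∈ s, L < ∑ i, g w (D i) := by simpa [good] using hD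
    exact Set.mem_biUnion hw hlt.le
  have hbad : Q.real goodᶜ ≤ δ :=
    calc Q.real goodᶜ ≤ ∑ w ∈ s, Q.real {D | L ≤ ∑ i, g w (D i)} :=
          (measureReal_mono hsub (measure_ne_top _ _)).trans (measureReal_biUnion_finset_le _ _)
      _ ≤ ∑ _w ∈ s, Real.exp (-L) := Finset.sum_le_sum fun w hw =>
          measureReal_pi_le_sum_le_exp_neg (hint w hw) (hg w hw) L
      _ ≤ δ := by simpa using hs
  have hone : 1 ≤ Q.real good + Q.real goodᶜ := by
    simpa using measureReal_union_le (μ := Q) good goodᶜ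
  rw [← ofReal_measureReal]
  exact ENNReal.ofReal_le_ofReal (by linarith)

end UnionBound

section Grid

/-- The multiples of `η` in `[-V, V]`: a finite `η`-net of that interval, symmetric about `0`. -/
noncomputable def symmGrid (η V : ℝ) : Finset ℝ :=
  (Finset.Icc (-⌊V / η⌋) ⌊V / η⌋).image fun j : ℤ => η * j

variable {η V u e : ℝ}

lemma card_symmGrid_le (hη : 0 < η) (hV : 0 ≤ V) : (#(symmGrid η V) : ℝ) ≤ 2 * (V / η) + 1 := by
  have hfloor : 0 ≤ ⌊V / η⌋ := Int.floor_nonneg.2 (by positivity)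
  have hcard : (#(symmGrid η V) : ℤ) ≤ 2 * ⌊V / η⌋ + 1 := by
    have := Finset.card_image_le (s := Finset.Icc (-⌊V / η⌋) ⌊V / η⌋) (f := fun j : ℤ => η * j)
    rw [Int.card_Icc] at this
    unfold symmGrid
    lia
  calc (#(symmGrid η V) : ℝ) ≤ 2 * (⌊V / η⌋ : ℝ) + 1 := by exact_mod_cast hcard
    _ ≤ 2 * (V / η) + 1 := by gcongr; exact Int.floor_le _

lemma abs_le_of_mem_symmGrid (hη : 0 < η) (hu : u ∈ symmGrid η V) : |u| ≤ V := by
  obtain ⟨j, hj, rfl⟩ := Finset.mem_image.1 hu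
  have hj' : |(j : ℝ)| ≤ ⌊V / η⌋ := by exact_mod_cast abs_le.2 (Finset.mem_Icc.1 hj)
  calc |η * j| = η * |(j : ℝ)| := by rw [abs_mul, abs_of_pos hη]
    _ ≤ η * (V / η) := by gcongr; exact hj'.trans (Int.floor_le _)
    _ = V := mul_div_cancel₀ V hη.ne'

lemma neg_mem_symmGrid (hu : u ∈ symmGrid η V) : -u ∈ symmGrid η V := by
  obtain ⟨j, hj, rfl⟩ := Finset.mem_image.1 hu
  rw [Finset.mem_Icc] at hj
  exact Finset.mem_image.2 ⟨-j, Finset.mem_Icc.2 (by lia), by push_cast; ring⟩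

lemma exists_mem_symmGrid (hη : 0 < η) (he : |e| ≤ V) :
    ∃ u ∈ symmGrid η V, 0 ≤ u * (e - u) ∧ |e - u| ≤ η := by
  wlog hpos : 0 ≤ e generalizing e
  · obtain ⟨u, hu, hmul, habs⟩ := this (e := -e) (by rwa [abs_neg]) (by linarith)
    exact ⟨-u, neg_mem_symmGrid hu, by linarith, by rwa [← abs_neg, neg_sub', neg_neg]⟩
  -- Rounding towards zero keeps `u` between `0` and `e`.
  have hfloor : 0 ≤ ⌊e / η⌋ := Int.floor_nonneg.2 (by positivity)
  have hle : η * ⌊e / η⌋ ≤ e := by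
    rw [← le_div_iff₀' hη]
    exact Int.floor_le _
  have hlt : e < η * (⌊e / η⌋ + 1) := by
    rw [← div_lt_iff₀' hη]
    exact Int.lt_floor_add_one _
  refine ⟨η * ⌊e / η⌋, Finset.mem_image.2 ⟨⌊e / η⌋, Finset.mem_Icc.2 ?_, rfl⟩, ?_, ?_⟩
  · have : ⌊e / η⌋ ≤ ⌊V / η⌋ := Int.floor_le_floor (by gcongr; exact (le_abs_self e).trans he)
    lia
  · exact mul_nonneg (by positivity) (sub_nonneg.2 hle)
  · rw [abs_of_nonneg (sub_nonneg.2 hle)]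
    linarith

lemma card_piFinset_symmGrid_mul_exp_neg_le {X : Type*} [Fintype X] [DecidableEq X] {ε δ : ℝ}
    (hε : 0 < ε) (hεV : ε ≤ V) (hδ : 0 < δ) :
    #(Fintype.piFinset fun _ : X => symmGrid (ε / 4) V) *
      Real.exp (-(Fintype.card X * Real.log (16 * V ^ 2 / ε ^ 2) + Real.log (1 / δ))) ≤ δ := by
  have hV : 0 < V := hε.trans_le hεV
  have hratio : 1 ≤ V / ε := (one_le_div hε).2 hεV
  have hgrid : (#(symmGrid (ε / 4) V) : ℝ) ≤ 16 * V ^ 2 / ε ^ 2 :=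
    calc (#(symmGrid (ε / 4) V) : ℝ) ≤ 2 * (V / (ε / 4)) + 1 :=
          card_symmGrid_le (by positivity) hV.le
      _ = 8 * (V / ε) + 1 := by field_simp; ring
      _ ≤ 16 * (V / ε) ^ 2 := by nlinarith
      _ = 16 * V ^ 2 / ε ^ 2 := by ring
  have hexp : Real.exp (-(Fintype.card X * Real.log (16 * V ^ 2 / ε ^ 2) + Real.log (1 / δ))) =
      ((16 * V ^ 2 / ε ^ 2) ^ Fintype.card X)⁻¹ * δ := by
    rw [neg_add, Real.exp_add, Real.exp_neg, Real.exp_nat_mul, Real.exp_log (by positivity),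
      ← Real.log_inv, one_div, inv_inv, Real.exp_log hδ]
  rw [Fintype.card_piFinset, Finset.prod_const, Finset.card_univ, Nat.cast_pow, hexp, ← mul_assoc]
  refine mul_le_of_le_one_left hδ.le ?_
  rw [← div_eq_mul_inv]
  exact div_le_one_of_le₀ (by gcongr) (by positivity)

end Grid

section ExponentialMoment

lemma exp_mul_sub_div_le {V u z : ℝ} (hV : 0 < V) (hu : |u| ≤ V) (hz : |z| ≤ V) :
    Real.exp (u * (z - u) / (4 * V ^ 2)) ≤
      1 + (u / (4 * V ^ 2) - u ^ 3 / (8 * V ^ 4)) * z - u ^ 2 / (8 * V ^ 2) := by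
  have hsmall : |u * (z - u) / (4 * V ^ 2)| ≤ 1 := by
    rw [abs_div, abs_mul, abs_of_pos (show 0 < 4 * V ^ 2 by positivity),
      div_le_one (by positivity)]
    calc |u| * |z - u| ≤ V * (V + V) := by gcongr; exact (abs_sub z u).trans (add_le_add hz hu)
      _ ≤ 4 * V ^ 2 := by nlinarith
  have hexp := (abs_le.1 (Real.abs_exp_sub_one_sub_id_le hsmall)).2
  have hremainder : u ^ 2 * (z ^ 2 + u ^ 2) ≤ u ^ 2 * (V ^ 2 + V ^ 2) := by
    have hsq : ∀ {x : ℝ}, |x| ≤ V → x ^ 2 ≤ V ^ 2 := fun h => sq_le_sq.2 (by rwa [abs_of_pos hV])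
    exact mul_le_mul_of_nonneg_left (add_le_add (hsq hz) (hsq hu)) (sq_nonneg u)
  calc Real.exp (u * (z - u) / (4 * V ^ 2))
      ≤ 1 + u * (z - u) / (4 * V ^ 2) + (u * (z - u) / (4 * V ^ 2)) ^ 2 := by linarith
    _ = 1 + (u / (4 * V ^ 2) - u ^ 3 / (8 * V ^ 4)) * z - u ^ 2 / (4 * V ^ 2)
        + u ^ 2 * (z ^ 2 + u ^ 2) / (16 * V ^ 4) := by field_simp; ring
    _ ≤ 1 + (u / (4 * V ^ 2) - u ^ 3 / (8 * V ^ 4)) * z - u ^ 2 / (4 * V ^ 2)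
        + u ^ 2 * (V ^ 2 + V ^ 2) / (16 * V ^ 4) := by gcongr
    _ = 1 + (u / (4 * V ^ 2) - u ^ 3 / (8 * V ^ 4)) * z - u ^ 2 / (8 * V ^ 2) := by
      field_simp; ring

variable {Ω X : Type*} [MeasurableSpace Ω] [MeasurableSpace X] [MeasurableSingletonClass X]
  [Finite X] {ρ : Measure Ω} {c : Ω → X}

lemma integrable_comp_of_finite [IsFiniteMeasure ρ] (hc : Measurable c) (b : X → ℝ) :
    Integrable (fun ω => b (c ω)) ρ :=
  (Integrable.of_finite (μ := ρ.map c)).comp_measurable hc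

lemma integral_sq_le_of_abs_le_comp [IsProbabilityMeasure ρ] {F : Ω → ℝ} {d u : X → ℝ} {η : ℝ}
    (hc : Measurable c) (hF : AEStronglyMeasurable F ρ) (hFd : ∀ ω, |F ω| ≤ |d (c ω)|)
    (hdu : ∀ x, |d x - u x| ≤ η) :
    ∫ ω, F ω ^ 2 ∂ρ ≤ 3 / 2 * ∫ ω, u (c ω) ^ 2 ∂ρ + 3 * η ^ 2 := by
  have hpoint : ∀ ω, F ω ^ 2 ≤ 3 / 2 * u (c ω) ^ 2 + 3 * η ^ 2 := fun ω => by
    have hFsq : F ω ^ 2 ≤ d (c ω) ^ 2 := sq_le_sq.2 (hFd ω)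
    have hdusq : (d (c ω) - u (c ω)) ^ 2 ≤ η ^ 2 := sq_le_sq.2 ((hdu _).trans (le_abs_self η))
    nlinarith [sq_nonneg (u (c ω) - 2 * (d (c ω) - u (c ω)))]
  have husq : Integrable (fun ω => 3 / 2 * u (c ω) ^ 2) ρ :=
    integrable_comp_of_finite hc fun x => 3 / 2 * u x ^ 2
  have hFint : Integrable (fun ω => F ω ^ 2) ρ :=
    (integrable_comp_of_finite hc fun x => d x ^ 2).mono' (hF.pow 2) <| .of_forall fun ω => by
      rw [Real.norm_of_nonneg (sq_nonneg _)]
      exact sq_le_sq.2 (hFd ω)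
  calc ∫ ω, F ω ^ 2 ∂ρ ≤ ∫ ω, (3 / 2 * u (c ω) ^ 2 + 3 * η ^ 2) ∂ρ :=
        integral_mono hFint (husq.add (integrable_const _)) hpoint
    _ = 3 / 2 * ∫ ω, u (c ω) ^ 2 ∂ρ + 3 * η ^ 2 := by
        rw [integral_add husq (integrable_const _), integral_const_mul]
        simp

/-- The Chernoff exponent that tests the residual `Z` against the cellwise constant function `u`.
The scale `4 * V ^ 2` is chosen so that its exponential has mean at most one when `u` and `Z` are
bounded by `V` and `Z` has mean zero on every cell. -/
noncomputable def excess (ρ : Measure Ω) (c : Ω → X) (Z : Ω → ℝ) (V : ℝ) (u : X → ℝ) (ω : Ω) : ℝ :=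
  u (c ω) * (Z ω - u (c ω)) / (4 * V ^ 2) + (∫ ω', u (c ω') ^ 2 ∂ρ) / (8 * V ^ 2)

lemma integrable_exp_excess_and_integral_le_one [IsProbabilityMeasure ρ] {Z : Ω → ℝ} {V : ℝ}
    {u : X → ℝ} (hV : 0 < V) (hc : Measurable c) (hZ : Measurable Z) (hZV : ∀ ω, |Z ω| ≤ V)
    (huV : ∀ x, |u x| ≤ V) (horth : ∀ b : X → ℝ, ∫ ω, b (c ω) * Z ω ∂ρ = 0) :
    Integrable (fun ω => Real.exp (excess ρ c Z V u ω)) ρ ∧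
      ∫ ω, Real.exp (excess ρ c Z V u ω) ∂ρ ≤ 1 := by
  set N := ∫ ω, u (c ω) ^ 2 ∂ρ
  let b : X → ℝ := fun x => u x / (4 * V ^ 2) - u x ^ 3 / (8 * V ^ 4)
  let major : Ω → ℝ := fun ω => 1 + b (c ω) * Z ω - u (c ω) ^ 2 / (8 * V ^ 2)
  have hlinear : Integrable (fun ω => b (c ω) * Z ω) ρ :=
    (integrable_comp_of_finite hc b).mul_bdd hZ.aestronglyMeasurable (.of_forall hZV)
  have hsq : Integrable (fun ω => u (c ω) ^ 2 / (8 * V ^ 2)) ρ :=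
    integrable_comp_of_finite hc fun x => u x ^ 2 / (8 * V ^ 2)
  have haffine : Integrable (fun ω => 1 + b (c ω) * Z ω) ρ := (integrable_const 1).add hlinear
  have hmajor : Integrable major ρ := haffine.sub hsq
  have hintegral : ∫ ω, major ω ∂ρ = 1 - N / (8 * V ^ 2) := by
    simp only [major]
    rw [integral_sub haffine hsq, integral_add (integrable_const 1) hlinear, horth b, integral_div]
    simp [N]
  have hle : ∀ ω, Real.exp (excess ρ c Z V u ω) ≤ Real.exp (N / (8 * V ^ 2)) * major ω := by
    intro ω
    rw [excess, Real.exp_add, mul_comm]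
    exact mul_le_mul_of_nonneg_left (exp_mul_sub_div_le hV (huV _) (hZV ω)) (Real.exp_pos _).le
  have hint : Integrable (fun ω => Real.exp (excess ρ c Z V u ω)) ρ := by
    refine (hmajor.const_mul (Real.exp (N / (8 * V ^ 2)))).mono' ?_ (.of_forall fun ω => ?_)
    · have hu : Measurable u := measurable_of_finite u
      have hexcess : Measurable (excess ρ c Z V u) := by
        unfold excess
        fun_prop
      exact hexcess.exp.aestronglyMeasurable
    · rw [Real.norm_of_nonneg (Real.exp_pos _).le]
      exact hle ω
  refine ⟨hint, ?_⟩
  calc ∫ ω, Real.exp (excess ρ c Z V u ω) ∂ρ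
      ≤ ∫ ω, Real.exp (N / (8 * V ^ 2)) * major ω ∂ρ :=
        integral_mono hint (hmajor.const_mul _) hle
    _ = Real.exp (N / (8 * V ^ 2)) * (1 - N / (8 * V ^ 2)) := by
        rw [integral_const_mul, hintegral]
    _ ≤ Real.exp (N / (8 * V ^ 2)) * Real.exp (-(N / (8 * V ^ 2))) := by
        gcongr
        exact Real.one_sub_le_exp_neg _
    _ = 1 := by rw [← Real.exp_add, add_neg_cancel, Real.exp_zero]

end ExponentialMoment

lemma rangeFactorization_preimage_singleton {Ω X : Type*} (c : Ω → X) (y : Set.range c) :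
    Set.rangeFactorization c ⁻¹' {y} = c ⁻¹' {(y : X)} :=
  Set.ext fun ω => Set.rangeFactorization_eq_iff ω y

section CellMean

variable {Ω X : Type*} [MeasurableSpace Ω] {ρ : Measure Ω} {c : Ω → X} {Y : Ω → ℝ}

/-- The mean of `Y` over the cell of `c` labelled `x`, with respect to `ρ`. Null cells get the
value `0`. -/
noncomputable def cellMean (ρ : Measure Ω) (c : Ω → X) (Y : Ω → ℝ) (x : X) : ℝ :=
  ⨍ ω in c ⁻¹' {x}, Y ω ∂ρ

lemma cellMean_rangeFactorization (y : Set.range c) :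
    cellMean ρ (Set.rangeFactorization c) Y y = cellMean ρ c Y y := by
  rw [cellMean, cellMean, rangeFactorization_preimage_singleton]

lemma cellMean_mem_Icc [IsFiniteMeasure ρ] {V : ℝ} (hV : 0 ≤ V)
    (hYint : Integrable Y ρ) (hY : ∀ ω, Y ω ∈ Set.Icc 0 V) (x : X) :
    cellMean ρ c Y x ∈ Set.Icc 0 V := by
  by_cases hnull : ρ (c ⁻¹' {x}) = 0
  · simpa [cellMean, setAverage_eq, measureReal_def, hnull] using hV
  · exact (convex_Icc 0 V).set_average_mem isClosed_Icc hnull (measure_ne_top _ _)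
      (.of_forall hY) hYint.integrableOn

lemma integral_comp_mul_sub_cellMean [Finite X] [MeasurableSpace X] [MeasurableSingletonClass X]
    [IsFiniteMeasure ρ] (hc : Measurable c) (hY : Integrable Y ρ) (b : X → ℝ) :
    ∫ ω, b (c ω) * (Y ω - cellMean ρ c Y (c ω)) ∂ρ = 0 := by
  have := Fintype.ofFinite X
  have hcell : ∀ x, MeasurableSet (c ⁻¹' {x}) := fun x => hc (measurableSet_singleton x)
  have hconst : ∀ x, Set.EqOn (fun ω => b (c ω) * (Y ω - cellMean ρ c Y (c ω)))
      (fun ω => b x * (Y ω - cellMean ρ c Y x)) (c ⁻¹' {x}) := by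
    rintro x ω rfl
    rfl
  have hzero : ∀ x, ∫ ω in c ⁻¹' {x}, b (c ω) * (Y ω - cellMean ρ c Y (c ω)) ∂ρ = 0 := by
    intro x
    rw [setIntegral_congr_fun (hcell x) (hconst x), integral_const_mul]
    exact mul_eq_zero_of_right _ (integral_sub_average _ _)
  have hint : ∀ x, IntegrableOn (fun ω => b (c ω) * (Y ω - cellMean ρ c Y (c ω))) (c ⁻¹' {x}) ρ :=
    fun x => .congr_fun (((hY.sub (integrable_const _)).const_mul _).integrableOn)
      (hconst x).symm (hcell x)
  rw [← setIntegral_univ, ← Set.preimage_univ (f := c), ← Set.iUnion_of_singleton X,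
    Set.preimage_iUnion, integral_iUnion_fintype hcell (pairwise_disjoint_fiber c) hint]
  exact Finset.sum_eq_zero fun x _ => hzero x

end CellMean

lemma sum_mul_sub_sum_fiber_div_card {ι X : Type*} [Fintype ι] [DecidableEq X] (c : ι → X)
    (y : ι → ℝ) (b : X → ℝ) :
    ∑ i, b (c i) * (y i - (∑ j with c j = c i, y j) / #{j | c j = c i}) = 0 := by
  have hswap : ∑ i, b (c i) * ((∑ j with c j = c i, y j) / #{j | c j = c i}) =
      ∑ j, b (c j) * y j :=
    calc ∑ i, b (c i) * ((∑ j with c j = c i, y j) / #{j | c j = c i})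
        = ∑ i, ∑ j with c j = c i, b (c j) * y j / #{k | c k = c j} := by
          refine Finset.sum_congr rfl fun i _ => ?_
          rw [Finset.sum_div, Finset.mul_sum]
          refine Finset.sum_congr rfl fun j hj => ?_
          rw [(Finset.mem_filter.1 hj).2, mul_div_assoc]
      _ = ∑ j, ∑ i with c i = c j, b (c j) * y j / #{k | c k = c j} :=
          Finset.sum_comm' (by simp [eq_comm])
      _ = ∑ j, b (c j) * y j := by
          refine Finset.sum_congr rfl fun j _ => ?_
          have hcard : (#{k | c k = c j} : ℝ) ≠ 0 :=
            Nat.cast_ne_zero.2 (Finset.card_ne_zero_of_mem (a := j) (by simp))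
          rw [Finset.sum_const, nsmul_eq_mul, mul_div_cancel₀ _ hcard]
  simp only [mul_sub, Finset.sum_sub_distrib, hswap, sub_self]

section Regressogram

variable {Ω ι X : Type*} [MeasurableSpace Ω] [Fintype ι] [DecidableEq X]

/-- `h` is a regressogram of the sample `D`: the empirical mean of `Y` on every cell of `c` that
contains a sample point, and an arbitrary function with values in `[0, V]`, not necessarily
constant on cells, elsewhere. -/
structure IsRegressogram (c : Ω → X) (Y : Ω → ℝ) (V : ℝ) (D : ι → Ω) (h : Ω → ℝ) : Prop where
  measurable : Measurable h
  eq_div_card : ∀ ω, (∃ i, c (D i) = c ω) →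
    h ω = (∑ i with c (D i) = c ω, Y (D i)) / #{i | c (D i) = c ω}
  mem_Icc_of_not_exists : ∀ ω, (¬∃ i, c (D i) = c ω) → h ω ∈ Set.Icc 0 V

namespace IsRegressogram

variable {c : Ω → X} {Y : Ω → ℝ} {V : ℝ} {D : ι → Ω} {h : Ω → ℝ} {d m u : X → ℝ}

lemma rangeFactorization (hh : IsRegressogram c Y V D h) :
    IsRegressogram (Set.rangeFactorization c) Y V D h where
  measurable := hh.measurable
  eq_div_card ω hω := by
    simp only [Set.rangeFactorization_eq_rangeFactorization_iff] at hω ⊢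
    exact hh.eq_div_card ω hω
  mem_Icc_of_not_exists ω hω := by
    simp only [Set.rangeFactorization_eq_rangeFactorization_iff] at hω
    exact hh.mem_Icc_of_not_exists ω hω

lemma mem_Icc (hh : IsRegressogram c Y V D h) (hY : ∀ ω, Y ω ∈ Set.Icc 0 V) (ω : Ω) :
    h ω ∈ Set.Icc 0 V := by
  by_cases hhit : ∃ i, c (D i) = c ω
  · obtain ⟨i, hi⟩ := hhit
    have hcard : (0 : ℝ) < #{i | c (D i) = c ω} :=
      Nat.cast_pos.2 (Finset.card_pos.2 ⟨i, by simpa using hi⟩)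
    rw [hh.eq_div_card ω ⟨i, hi⟩, Set.mem_Icc, div_le_iff₀' hcard, ← nsmul_eq_mul]
    exact ⟨div_nonneg (Finset.sum_nonneg fun i _ => (hY (D i)).1) hcard.le,
      Finset.sum_le_card_nsmul _ _ _ fun i _ => (hY (D i)).2⟩
  · exact hh.mem_Icc_of_not_exists ω hhit

lemma exists_cellwise_deviation (hh : IsRegressogram c Y V D h) (hV : 0 ≤ V)
    (hY : ∀ ω, Y ω ∈ Set.Icc 0 V) (hm : ∀ x, m x ∈ Set.Icc 0 V) :
    ∃ d : X → ℝ, (∀ x, |d x| ≤ V) ∧ (∀ ω, |h ω - m (c ω)| ≤ |d (c ω)|) ∧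
      ∀ i, h (D i) - m (c (D i)) = d (c (D i)) := by
  classical
  have hbound : ∀ ω, |h ω - m (c ω)| ≤ V := fun ω =>
    abs_sub_le_of_nonneg_of_le (hh.mem_Icc hY ω).1 (hh.mem_Icc hY ω).2 (hm _).1 (hm _).2
  let d : X → ℝ := fun x =>
    if ∃ i, c (D i) = x then (∑ i with c (D i) = x, Y (D i)) / #{i | c (D i) = x} - m x else V
  have hhit : ∀ ω, (∃ i, c (D i) = c ω) → h ω - m (c ω) = d (c ω) := fun ω hω => by
    simp only [d, if_pos hω, hh.eq_div_card ω hω]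
  refine ⟨d, fun x => ?_, fun ω => ?_, fun i => hhit (D i) ⟨i, rfl⟩⟩
  · by_cases hx : ∃ i, c (D i) = x
    · obtain ⟨i, rfl⟩ := hx
      rw [← hhit (D i) ⟨i, rfl⟩]
      exact hbound (D i)
    · simp only [d, if_neg hx, abs_of_nonneg hV, le_refl]
  · by_cases hω : ∃ i, c (D i) = c ω
    · rw [hhit ω hω]
    · simpa only [d, if_neg hω, abs_of_nonneg hV] using hbound ω

lemma sum_mul_residual_sub_nonneg (hh : IsRegressogram c Y V D h)
    (hd : ∀ i, h (D i) - m (c (D i)) = d (c (D i))) (hu : ∀ x, 0 ≤ u x * (d x - u x)) :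
    0 ≤ ∑ i, u (c (D i)) * (Y (D i) - m (c (D i)) - u (c (D i))) := by
  have horth : ∑ i, u (c (D i)) * (Y (D i) - h (D i)) = 0 := by
    simpa only [← hh.eq_div_card _ ⟨_, rfl⟩] using
      sum_mul_sub_sum_fiber_div_card (fun i => c (D i)) (fun i => Y (D i)) u
  calc 0 ≤ ∑ i, u (c (D i)) * (d (c (D i)) - u (c (D i))) := Finset.sum_nonneg fun i _ => hu _
    _ = ∑ i, (u (c (D i)) * (Y (D i) - m (c (D i)) - u (c (D i))) -
          u (c (D i)) * (Y (D i) - h (D i))) :=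
        Finset.sum_congr rfl fun i _ => by rw [← hd i]; ring
    _ = ∑ i, u (c (D i)) * (Y (D i) - m (c (D i)) - u (c (D i))) := by
        rw [Finset.sum_sub_distrib, horth, sub_zero]

lemma card_mul_integral_sq_le_sum_excess {ρ : Measure Ω} (hh : IsRegressogram c Y V D h)
    (hd : ∀ i, h (D i) - m (c (D i)) = d (c (D i))) (hu : ∀ x, 0 ≤ u x * (d x - u x)) :
    Fintype.card ι * ((∫ ω, u (c ω) ^ 2 ∂ρ) / (8 * V ^ 2)) ≤
      ∑ i, excess ρ c (fun ω => Y ω - m (c ω)) V u (D i) := by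
  simp only [excess, Finset.sum_add_distrib, ← Finset.sum_div, Finset.sum_const, nsmul_eq_mul,
    Finset.card_univ]
  rw [← mul_div_assoc]
  exact le_add_of_nonneg_left
    (div_nonneg (hh.sum_mul_residual_sub_nonneg hd hu) (show 0 ≤ 4 * V ^ 2 by positivity))

end IsRegressogram

lemma IsRegressogram.sqrt_integral_le [Finite X] [MeasurableSpace X] [MeasurableSingletonClass X]
    {ρ : Measure Ω} [IsProbabilityMeasure ρ] {c : Ω → X} {Y : Ω → ℝ} {V ε L : ℝ} {D : ι → Ω}
    {h : Ω → ℝ} {m : X → ℝ} (hh : IsRegressogram c Y V D h) (hc : Measurable c)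
    (hY : ∀ ω, Y ω ∈ Set.Icc 0 V) (hm : ∀ x, m x ∈ Set.Icc 0 V) (hV : 0 < V) (hε : 0 < ε)
    (hL : 0 < L) (hn : 16 * V ^ 2 * L / ε ^ 2 ≤ Fintype.card ι)
    (hgood : ∀ u : X → ℝ, (∀ x, u x ∈ symmGrid (ε / 4) V) →
      ∑ i, excess ρ c (fun ω => Y ω - m (c ω)) V u (D i) ≤ L) :
    √(∫ ω, (h ω - m (c ω)) ^ 2 ∂ρ) ≤ ε := by
  obtain ⟨d, hdV, hhd, hdD⟩ := hh.exists_cellwise_deviation hV.le hY hm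
  choose u hugrid husign hunear using fun x =>
    exists_mem_symmGrid (show 0 < ε / 4 by positivity) (hdV x)
  set N := ∫ ω, u (c ω) ^ 2 ∂ρ
  have hexcess : 16 * V ^ 2 * L / ε ^ 2 * (N / (8 * V ^ 2)) ≤ L :=
    calc 16 * V ^ 2 * L / ε ^ 2 * (N / (8 * V ^ 2)) ≤ Fintype.card ι * (N / (8 * V ^ 2)) := by
          gcongr
      _ ≤ L := (hh.card_mul_integral_sq_le_sum_excess hdD husign).trans (hgood u hugrid)
  have hN : N ≤ ε ^ 2 / 2 := by
    have hcancel : 16 * V ^ 2 * L / ε ^ 2 * (N / (8 * V ^ 2)) = L * (N / (ε ^ 2 / 2)) := by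
      field_simp
      ring
    rw [hcancel] at hexcess
    exact (div_le_one (by positivity)).1 (le_of_mul_le_mul_left (by rwa [mul_one]) hL)
  have hF : Measurable fun ω => h ω - m (c ω) :=
    hh.measurable.sub ((measurable_of_finite m).comp hc)
  rw [Real.sqrt_le_left hε.le]
  calc ∫ ω, (h ω - m (c ω)) ^ 2 ∂ρ ≤ 3 / 2 * N + 3 * (ε / 4) ^ 2 :=
        integral_sq_le_of_abs_le_comp hc hF.aestronglyMeasurable hhd hunear
    _ ≤ 3 / 2 * (ε ^ 2 / 2) + 3 * (ε / 4) ^ 2 := by gcongr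
    _ ≤ ε ^ 2 := by nlinarith

lemma ofReal_one_sub_le_measure_pi_forall_isRegressogram [Fintype X] [MeasurableSpace X]
    [MeasurableSingletonClass X] {ρ : Measure Ω} [IsProbabilityMeasure ρ] {c : Ω → X} {Y : Ω → ℝ}
    {V ε δ : ℝ} (hc : Measurable c) (hY : Measurable Y) (hYV : ∀ ω, Y ω ∈ Set.Icc 0 V) (hδ : 0 < δ)
    (hδ1 : δ < 1) (hε : 0 < ε) (hεV : ε ≤ V)
    (hn : 16 * V ^ 2 * (Fintype.card X * Real.log (16 * V ^ 2 / ε ^ 2) + Real.log (1 / δ)) / ε ^ 2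
      ≤ Fintype.card ι) :
    ENNReal.ofReal (1 - δ) ≤ (Measure.pi fun _ : ι => ρ) {D | ∀ h, IsRegressogram c Y V D h →
      √(∫ ω, (h ω - cellMean ρ c Y (c ω)) ^ 2 ∂ρ) ≤ ε} := by
  have hV : 0 < V := hε.trans_le hεV
  have hYint : Integrable Y ρ := .of_bound hY.aestronglyMeasurable V <| .of_forall fun ω => by
    rw [Real.norm_of_nonneg (hYV ω).1]
    exact (hYV ω).2
  have hmean := cellMean_mem_Icc (ρ := ρ) (c := c) hV.le hYint hYV
  have hlog : 0 ≤ Real.log (16 * V ^ 2 / ε ^ 2) :=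
    Real.log_nonneg ((one_le_div (by positivity)).2 (by nlinarith))
  have hL : 0 < Fintype.card X * Real.log (16 * V ^ 2 / ε ^ 2) + Real.log (1 / δ) :=
    add_pos_of_nonneg_of_pos (by positivity) (Real.log_pos ((one_lt_div hδ).2 hδ1))
  have htest : ∀ u ∈ Fintype.piFinset fun _ : X => symmGrid (ε / 4) V, _ := fun u hu =>
    integrable_exp_excess_and_integral_le_one (ρ := ρ) hV hc
      (hY.sub ((measurable_of_finite (cellMean ρ c Y)).comp hc))
      (fun ω => abs_sub_le_of_nonneg_of_le (hYV ω).1 (hYV ω).2 (hmean _).1 (hmean _).2)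
      (fun x => abs_le_of_mem_symmGrid (by positivity) (Fintype.mem_piFinset.1 hu x))
      (integral_comp_mul_sub_cellMean hc hYint)
  refine (ofReal_one_sub_le_measure_pi_forall_sum_le _ (fun u hu => (htest u hu).1)
    (fun u hu => (htest u hu).2) (card_piFinset_symmGrid_mul_exp_neg_le hε hεV hδ)).trans
    (measure_mono fun D hD h hh => ?_)
  exact hh.sqrt_integral_le hc hYV hmean hV hε hL hn
    fun u hu => hD u (Fintype.mem_piFinset.2 hu)

theorem stmt10_general {ρ : Measure Ω} [IsProbabilityMeasure ρ] {c : Ω → X} [Finite (Set.range c)]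
    {Y : Ω → ℝ} {V ε δ : ℝ} (hc : ∀ x, MeasurableSet (c ⁻¹' {x})) (hY : Measurable Y)
    (hYV : ∀ ω, Y ω ∈ Set.Icc 0 V) (hδ : 0 < δ) (hδ1 : δ < 1) (hε : 0 < ε) (hεV : ε ≤ V)
    (hn : 16 * V ^ 2 * (Nat.card (Set.range c) * Real.log (16 * V ^ 2 / ε ^ 2) +
      Real.log (1 / δ)) / ε ^ 2 ≤ Fintype.card ι) :
    ENNReal.ofReal (1 - δ) ≤ (Measure.pi fun _ : ι => ρ) {D | ∀ h, IsRegressogram c Y V D h →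
      √(∫ ω, (h ω - cellMean ρ c Y (c ω)) ^ 2 ∂ρ) ≤ ε} := by
  let : Fintype (Set.range c) := .ofFinite _
  let : MeasurableSpace (Set.range c) := ⊤
  have hmeas : Measurable (Set.rangeFactorization c) := measurable_to_countable' fun y => by
    simpa only [rangeFactorization_preimage_singleton] using hc y
  rw [Nat.card_eq_fintype_card] at hn
  refine (ofReal_one_sub_le_measure_pi_forall_isRegressogram hmeas hY hYV hδ hδ1 hε hεV hn).trans
    (measure_mono fun D hD h hh => ?_)
  simpa only [cellMean_rangeFactorization, Set.rangeFactorization_coe] using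
    hD h hh.rangeFactorization

end Regressogram

section Bellman

variable {S A X : Type*} [Fintype A] {P : S → A → S → ℝ} {R : S → A → ℝ} {Rmax γ Vmax : ℝ}
  {μ : S × A → ℝ} {φ : S × A → X} {f : S × A → ℝ}

/-- The one-sample estimate `r + γ V_f(s')` of `(T f)(s,a)` given by the transition
`x = ((s,a), s')`. -/
noncomputable def sampleBackup [Nonempty A] (R : S → A → ℝ) (γ : ℝ) (f : S × A → ℝ)
    (x : (S × A) × S) : ℝ :=
  R x.1.1 x.1.2 + γ * Vof f x.2

lemma Vof_mem_Icc [Nonempty A] {a b : ℝ} (hf : ∀ q, f q ∈ Set.Icc a b) (s : S) :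
    Vof f s ∈ Set.Icc a b := by
  obtain ⟨i⟩ := ‹Nonempty A›
  exact ⟨(hf (s, i)).1.trans (Finset.le_sup' (fun a => f (s, a)) (Finset.mem_univ i)),
    Finset.sup'_le _ _ fun a _ => (hf (s, a)).2⟩

lemma sampleBackup_mem_Icc [Nonempty A] (hR : ∀ s a, 0 ≤ R s a ∧ R s a ≤ Rmax) (hγ0 : 0 ≤ γ)
    (hγ1 : γ < 1) (hVmax : Vmax = Rmax / (1 - γ)) (hf : ∀ q, f q ∈ Set.Icc 0 Vmax)
    (x : (S × A) × S) : sampleBackup R γ f x ∈ Set.Icc 0 Vmax := by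
  obtain ⟨hR0, hR1⟩ := hR x.1.1 x.1.2
  obtain ⟨hf0, hf1⟩ := Vof_mem_Icc hf x.2
  have hsplit : Rmax + γ * Vmax = Vmax := by
    rw [eq_div_iff (by linarith)] at hVmax
    linarith
  exact ⟨add_nonneg hR0 (mul_nonneg hγ0 hf0),
    (add_le_add hR1 (mul_le_mul_of_nonneg_left hf1 hγ0)).trans_eq hsplit⟩

variable [Fintype S] [MeasurableSpace S] [MeasurableSingletonClass S] [MeasurableSpace A]
  [MeasurableSingletonClass A] {ρ : Measure ((S × A) × S)} [IsFiniteMeasure ρ]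

lemma integral_eq_sum_mul_sum_transition (hμ : ∀ q, 0 ≤ μ q) (hP0 : ∀ s a s', 0 ≤ P s a s')
    (hρ : ∀ x : (S × A) × S, ρ {x} = ENNReal.ofReal (μ x.1 * P x.1.1 x.1.2 x.2))
    (F : (S × A) × S → ℝ) :
    ∫ x, F x ∂ρ = ∑ q, μ q * ∑ s', P q.1 q.2 s' * F (q, s') := by
  rw [integral_fintype .of_finite, Fintype.sum_prod_type]
  refine Finset.sum_congr rfl fun q _ => ?_
  rw [Finset.mul_sum]
  refine Finset.sum_congr rfl fun s' _ => ?_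
  rw [measureReal_def, hρ, ENNReal.toReal_ofReal (mul_nonneg (hμ _) (hP0 _ _ _)), smul_eq_mul,
    mul_assoc]

lemma integral_comp_fst_eq_sum (hμ : ∀ q, 0 ≤ μ q) (hP0 : ∀ s a s', 0 ≤ P s a s')
    (hP1 : ∀ s a, ∑ s', P s a s' = 1)
    (hρ : ∀ x : (S × A) × S, ρ {x} = ENNReal.ofReal (μ x.1 * P x.1.1 x.1.2 x.2))
    (F : S × A → ℝ) : ∫ x, F x.1 ∂ρ = ∑ q, μ q * F q := by
  simp only [integral_eq_sum_mul_sum_transition hμ hP0 hρ, ← Finset.sum_mul, hP1, one_mul]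

lemma projT_eq_cellMean [Nonempty A] [DecidableEq X] (hμ : ∀ q, 0 ≤ μ q)
    (hP0 : ∀ s a s', 0 ≤ P s a s') (hP1 : ∀ s a, ∑ s', P s a s' = 1)
    (hρ : ∀ x : (S × A) × S, ρ {x} = ENNReal.ofReal (μ x.1 * P x.1.1 x.1.2 x.2)) (q : S × A) :
    projT P R γ μ φ f q =
      cellMean ρ (fun x => φ x.1) (sampleBackup R γ f) (φ q) := by
  set cell : Set ((S × A) × S) := (fun x => φ x.1) ⁻¹' {φ q} with hcell_eq
  have hcell : MeasurableSet cell := cell.toFinite.measurableSet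
  have hmass : ρ.real cell = ∑ q', if φ q' = φ q then μ q' else 0 := by
    have := integral_comp_fst_eq_sum hμ hP0 hP1 hρ fun q' => if φ q' = φ q then 1 else 0
    classical
    rw [← integral_indicator_one hcell]
    simpa [hcell_eq, Set.indicator_apply] using this
  have hbellman : ∀ q', bellmanT P R γ f q' =
      ∑ s', P q'.1 q'.2 s' * sampleBackup R γ f (q', s') := fun q' => by
    simp only [bellmanT, sampleBackup, mul_add, Finset.sum_add_distrib, ← Finset.sum_mul, hP1,
      one_mul, Finset.mul_sum, mul_left_comm]
  have hintegral : ∫ x in cell, sampleBackup R γ f x ∂ρ =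
      ∑ q', if φ q' = φ q then μ q' * bellmanT P R γ f q' else 0 := by
    rw [← integral_indicator hcell, integral_eq_sum_mul_sum_transition hμ hP0 hρ]
    refine Finset.sum_congr rfl fun q' _ => ?_
    by_cases hq' : φ q' = φ q <;> simp [hq', hcell_eq, hbellman]
  rw [cellMean, setAverage_eq, ← hcell_eq, hmass, hintegral, smul_eq_mul, ← div_eq_inv_mul, projT]

lemma sum_mul_sub_projT_sq_eq_integral [Nonempty A] [DecidableEq X] (hμ : ∀ q, 0 ≤ μ q)
    (hP0 : ∀ s a s', 0 ≤ P s a s') (hP1 : ∀ s a, ∑ s', P s a s' = 1)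
    (hρ : ∀ x : (S × A) × S, ρ {x} = ENNReal.ofReal (μ x.1 * P x.1.1 x.1.2 x.2))
    (g : S × A → ℝ) :
    ∑ q, μ q * (g q - projT P R γ μ φ f q) ^ 2 =
      ∫ x, (g x.1 - cellMean ρ (fun x => φ x.1) (sampleBackup R γ f) (φ x.1)) ^ 2 ∂ρ := by
  simp only [← projT_eq_cellMean hμ hP0 hP1 hρ]
  exact (integral_comp_fst_eq_sum hμ hP0 hP1 hρ fun q => (g q - projT P R γ μ φ f q) ^ 2).symm

end Bellman

/-- (Concentration of the empirical projected Bellman operator.)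
With `n` i.i.d. tuples `(sᵢ,aᵢ,rᵢ,s'ᵢ)` where `(sᵢ,aᵢ) ∼ μ`, `rᵢ = R(sᵢ,aᵢ)` and
`s'ᵢ ∼ P(·|sᵢ,aᵢ)`, and `T̂_φ^μ f` the empirical cellwise average of
`rᵢ + γ V_f(s'ᵢ)` (arbitrary in `[0, V_max]` on empty cells), if
`n ≥ 16 V_max² (|φ| log(16 V_max²/ε̃²) + log(2/δ)) / ε̃²`, then with probability at
least `1 − δ/2`, `‖T̂_φ^μ f − T_φ^μ f‖_{2,μ} ≤ ε̃`. -/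
theorem stmt10 {S A X : Type*} [Fintype S] [Fintype A] [Nonempty S] [Nonempty A]
    [DecidableEq X]
    [MeasurableSpace S] [MeasurableSingletonClass S]
    [MeasurableSpace A] [MeasurableSingletonClass A]
    (P : S → A → S → ℝ) (R : S → A → ℝ) (Rmax γ Vmax : ℝ)
    (hP0 : ∀ s a s', 0 ≤ P s a s') (hP1 : ∀ s a, ∑ s', P s a s' = 1)
    (hR : ∀ s a, 0 ≤ R s a ∧ R s a ≤ Rmax)
    (hγ0 : 0 ≤ γ) (hγ1 : γ < 1)
    (hVmax : Vmax = Rmax / (1 - γ))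
    (μ : S × A → ℝ) (hμpos : ∀ q, 0 < μ q) (hμsum : ∑ q, μ q = 1)
    (φ : S × A → X)
    (f : S × A → ℝ) (hf : ∀ q, 0 ≤ f q ∧ f q ≤ Vmax)
    (δ εt : ℝ) (hδ : 0 < δ) (hδ1 : δ < 1) (hεt : 0 < εt) (hεtV : εt ≤ Vmax)
    -- `ρ` is the joint law of a single tuple `((s,a), s')`
    (ρ : Measure ((S × A) × S)) [IsProbabilityMeasure ρ]
    (hρ : ∀ x : (S × A) × S, ρ {x} = ENNReal.ofReal (μ x.1 * P x.1.1 x.1.2 x.2))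
    (n : ℕ)
    -- `Temp D` is the empirical projected Bellman image `T̂_φ^μ f` built from `D`
    (Temp : (Fin n → (S × A) × S) → (S × A) → ℝ)
    (hTemp : ∀ D q, (∃ i, φ (D i).1 = φ q) →
      Temp D q =
        (∑ i : Fin n, if φ (D i).1 = φ q
            then R (D i).1.1 (D i).1.2 + γ * Vof f (D i).2 else 0)
          / ((Finset.univ.filter fun i : Fin n => φ (D i).1 = φ q).card : ℝ))
    (hTemp' : ∀ D q, (¬ ∃ i, φ (D i).1 = φ q) → 0 ≤ Temp D q ∧ Temp D q ≤ Vmax)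
    -- sample-size requirement
    (hn : (n : ℝ) ≥ 16 * Vmax ^ 2 *
        ((Nat.card (Set.range φ) : ℝ) * Real.log (16 * Vmax ^ 2 / εt ^ 2)
          + Real.log (2 / δ)) / εt ^ 2) :
    (Measure.pi fun _ : Fin n => ρ)
      {D | Real.sqrt (∑ q : S × A, μ q * (Temp D q - projT P R γ μ φ f q) ^ 2) ≤ εt}
      ≥ ENNReal.ofReal (1 - δ / 2) := by
  have hcells : Set.range (fun x : (S × A) × S => φ x.1) = Set.range φ :=
    Prod.fst_surjective.range_comp φ
  refine (stmt10_general (c := fun x : (S × A) × S => φ x.1) (fun _ => .of_discrete) .of_discrete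
    (sampleBackup_mem_Icc hR hγ0 hγ1 hVmax hf) (half_pos hδ) (by linarith) hεt hεtV
    (by simpa [hcells, one_div_div] using hn)).trans (measure_mono fun D hD => ?_)
  rw [Set.mem_ofPred_eq, sum_mul_sub_projT_sq_eq_integral (fun q => (hμpos q).le) hP0 hP1 hρ]
  exact hD _
    { measurable := .of_discrete
      eq_div_card := fun x => by simpa only [sampleBackup, Finset.sum_filter] using hTemp D x.1
      mem_Icc_of_not_exists := fun x => hTemp' D x.1 }
end

section
/- Fix f₀ : S × A → [0, V_max], δ ∈ (0,1), and 0 < ε₁ ≤ V_max. Let D = ((s₁,a₁), …, (sₙ,aₙ)) be n i.i.d. draws from μ, and for g : S × A → ℝ define the empirical norm ‖f₀ − g‖_{2,D} := ((1/n) \sum_{i=1}^n (f₀(sᵢ,aᵢ) − g(sᵢ,aᵢ))²)^{1/2}. Let G_φ^b denote the set of functions g : S × A → [0, V_max] that are piecewise constant with respect to φ, and let |φ| denote the number of nonempty aggregation cells. If n ≥ 50 V_max² |φ| ln(80 V_max/(ε₁ δ)) / ε₁², then with probability at least 1 − δ/2, for every g ∈ G_φ^b simultaneously, |‖f₀ −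 g‖_{2,D} − ‖f₀ − g‖_{2,μ}| ≤ ε₁. -/
open MeasureTheory

/-!
The square root stabilises the variance: if `Σ` is a sum of independent `[0, 1]`-valued variables
with mean `m`, then `e^x ≤ 1 + x + x²` on `[-1, 1]` gives `E e^{lΣ} ≤ e^{m (l + l²)}` for
`|l| ≤ 1`, and Chernoff's bound yields `P (t < |√Σ - √m|) ≤ 2 e^{-t²/4}` with no dependence on `m`.
Rescaling, the empirical and population norms of a function bounded by `V` differ by more than `t`
with probability at most `2 e^{-n t²/(4V²)}`. Restricting the cell values to an `ε₁/4`-net of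
`[0, Vmax]` leaves at most `(5 Vmax/ε₁)^|φ|` functions, so a union bound with `t = ε₁/2` applies;
passing from an arbitrary `g` to a nearby net function changes each norm by at most `ε₁/4`.
-/

namespace UniformConcentration

open Real Set ProbabilityTheory

section Norms

variable {Ω : Type*} {f g : Ω → ℝ} {η : ℝ}

/-- The norm `‖f‖_{2,ν}`. Unlike `lpNorm f 2 ν`, it is defined by the explicit formula used in the
theorem. -/
noncomputable def l2Norm [MeasurableSpace Ω] (ν : Measure Ω) (f : Ω → ℝ) : ℝ :=
  √(∫ q, f q ^ 2 ∂ν)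

/-- The empirical norm `‖f‖_{2,D}` of a sample `D` of size `n`. It is `0` when `n = 0`. -/
noncomputable def empiricalNorm {n : ℕ} (D : Fin n → Ω) (f : Ω → ℝ) : ℝ :=
  √((1 / (n : ℝ)) * ∑ i, f (D i) ^ 2)

lemma empiricalNorm_eq_l2Norm_uniformOn {n : ℕ} (D : Fin n → Ω) (f : Ω → ℝ) :
    empiricalNorm D f = l2Norm (uniformOn univ) (f ∘ D) := by
  have huniform : uniformOn (univ : Set (Fin n)) = (n : ENNReal)⁻¹ • Measure.count := by
    simp [uniformOn, ProbabilityTheory.cond]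
  simp [empiricalNorm, l2Norm, huniform, integral_smul_measure]

lemma l2Norm_eq_lpNorm [MeasurableSpace Ω] {ν : Measure Ω} (hf : AEStronglyMeasurable f ν) :
    l2Norm ν f = lpNorm f 2 ν := by
  simp [l2Norm, lpNorm_eq_integral_norm_rpow_toReal two_ne_zero ENNReal.ofNat_ne_top hf,
    sqrt_eq_rpow]

lemma abs_l2Norm_sub_l2Norm_le [MeasurableSpace Ω] {ν : Measure Ω} [IsProbabilityMeasure ν]
    (hf : MemLp f 2 ν) (hg : MemLp g 2 ν) (hfg : ∀ q, |f q - g q| ≤ η) :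
    |l2Norm ν f - l2Norm ν g| ≤ η := by
  have hη : 0 ≤ η := by
    have : Nonempty Ω := nonempty_of_isProbabilityMeasure ν
    exact (abs_nonneg _).trans (hfg (Classical.arbitrary Ω))
  have hdiff : lpNorm (f - g) 2 ν ≤ η := calc
    lpNorm (f - g) 2 ν ≤ lpNorm (fun _ ↦ η) 2 ν := lpNorm_mono_real (memLp_const η) hfg
    _ = η := by simp [abs_of_nonneg hη]
  rw [l2Norm_eq_lpNorm hf.1, l2Norm_eq_lpNorm hg.1, abs_sub_le_iff]
  have hle := lpNorm_le_lpNorm_add_lpNorm_sub (f := f) hg one_le_two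
  have hge := lpNorm_le_lpNorm_add_lpNorm_sub (f := g) hf one_le_two
  constructor <;> linarith [lpNorm_sub_comm f g 2 ν]

lemma abs_empiricalNorm_sub_empiricalNorm_le {n : ℕ} [NeZero n] (D : Fin n → Ω)
    (hfg : ∀ q, |f q - g q| ≤ η) : |empiricalNorm D f - empiricalNorm D g| ≤ η := by
  simp only [empiricalNorm_eq_l2Norm_uniformOn]
  exact abs_l2Norm_sub_l2Norm_le .of_discrete .of_discrete fun i ↦ hfg (D i)

lemma abs_empiricalNorm_sub_l2Norm_le_add [MeasurableSpace Ω] {ν : Measure Ω}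
    [IsProbabilityMeasure ν] {n : ℕ} [NeZero n] (D : Fin n → Ω)
    (hf : MemLp f 2 ν) (hg : MemLp g 2 ν) (hfg : ∀ q, |f q - g q| ≤ η) :
    |empiricalNorm D f - l2Norm ν f| ≤ |empiricalNorm D g - l2Norm ν g| + 2 * η := by
  have hempirical := abs_empiricalNorm_sub_empiricalNorm_le D hfg
  have hpopulation := abs_l2Norm_sub_l2Norm_le hf hg hfg
  grind

end Norms

section SqrtConcentration

variable {Ω ι : Type*} [MeasurableSpace Ω] {P : Measure Ω} [Fintype ι] {Y : ι → Ω → ℝ} {t : ℝ}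

lemma ae_sum_mem_Icc_card (hY : ∀ i, ∀ᵐ ω ∂P, Y i ω ∈ Icc 0 1) :
    ∀ᵐ ω ∂P, (∑ i, Y i) ω ∈ Icc (0 : ℝ) (Fintype.card ι) := by
  filter_upwards [ae_all_iff.mpr hY] with ω hω
  rw [Finset.sum_apply]
  exact ⟨Finset.sum_nonneg fun i _ ↦ (hω i).1,
    (Finset.sum_le_card_nsmul _ _ 1 fun i _ ↦ (hω i).2).trans_eq (by simp)⟩

lemma sum_integral_nonneg (hY : ∀ i, ∀ᵐ ω ∂P, Y i ω ∈ Icc 0 1) : 0 ≤ ∑ i, ∫ ω, Y i ω ∂P :=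
  Finset.sum_nonneg fun i _ ↦ integral_nonneg_of_ae ((hY i).mono fun _ h ↦ h.1)

variable [IsProbabilityMeasure P]

lemma mgf_le_exp_integral_mul {Z : Ω → ℝ} (hZm : AEMeasurable Z P)
    (hZ : ∀ᵐ ω ∂P, Z ω ∈ Icc 0 1) {l : ℝ} (hl : |l| ≤ 1) :
    mgf Z P l ≤ exp ((∫ ω, Z ω ∂P) * (l + l ^ 2)) := by
  have hZint : Integrable Z P := .of_mem_Icc 0 1 hZm hZ
  have hpointwise : ∀ᵐ ω ∂P, exp (l * Z ω) ≤ 1 + Z ω * (l + l ^ 2) := by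
    filter_upwards [hZ] with ω ⟨hZ0, hZ1⟩
    have hlZ : |l * Z ω| ≤ 1 := by
      rw [abs_mul, abs_of_nonneg hZ0]
      exact mul_le_one₀ hl hZ0 hZ1
    have hquadratic := (abs_le.mp (abs_exp_sub_one_sub_id_le hlZ)).2
    have hsq : l ^ 2 * Z ω ^ 2 ≤ l ^ 2 * Z ω :=
      mul_le_mul_of_nonneg_left (pow_le_of_le_one hZ0 hZ1 two_ne_zero) (sq_nonneg l)
    linarith [mul_pow l (Z ω) 2]
  calc mgf Z P l ≤ ∫ ω, (1 + Z ω * (l + l ^ 2)) ∂P :=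
        integral_mono_ae (integrable_exp_mul_of_mem_Icc hZm hZ)
          ((integrable_const 1).add (hZint.mul_const _)) hpointwise
    _ = (∫ ω, Z ω ∂P) * (l + l ^ 2) + 1 := by
        rw [integral_add (integrable_const 1) (hZint.mul_const _), integral_mul_const]
        simp [add_comm]
    _ ≤ _ := add_one_le_exp _

lemma mgf_sum_le_exp (hindep : iIndepFun Y P) (hYm : ∀ i, AEMeasurable (Y i) P)
    (hY : ∀ i, ∀ᵐ ω ∂P, Y i ω ∈ Icc 0 1) {l : ℝ} (hl : |l| ≤ 1) :
    mgf (∑ i, Y i) P l ≤ exp ((∑ i, ∫ ω, Y i ω ∂P) * (l + l ^ 2)) := by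
  rw [hindep.mgf_sum₀ hYm, Finset.sum_mul, exp_sum]
  exact Finset.prod_le_prod (fun _ _ ↦ mgf_nonneg)
    fun i _ ↦ mgf_le_exp_integral_mul (hYm i) (hY i) hl

lemma integrable_exp_mul_sum (hYm : ∀ i, AEMeasurable (Y i) P)
    (hY : ∀ i, ∀ᵐ ω ∂P, Y i ω ∈ Icc 0 1) (l : ℝ) :
    Integrable (fun ω ↦ exp (l * (∑ i, Y i) ω)) P :=
  integrable_exp_mul_of_mem_Icc (Finset.aemeasurable_sum _ fun i _ ↦ hYm i) (ae_sum_mem_Icc_card hY)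

lemma measureReal_lt_sqrt_sum_sub_le (hindep : iIndepFun Y P) (hYm : ∀ i, AEMeasurable (Y i) P)
    (hY : ∀ i, ∀ᵐ ω ∂P, Y i ω ∈ Icc 0 1) (ht : 0 ≤ t) :
    P.real {ω | t < √((∑ i, Y i) ω) - √(∑ i, ∫ ω, Y i ω ∂P)} ≤ exp (-t ^ 2) := by
  set m := ∑ i, ∫ ω, Y i ω ∂P
  have hm : √m ^ 2 = m := sq_sqrt (sum_integral_nonneg hY)
  set s := √m
  have hs : 0 ≤ s := sqrt_nonneg m
  have hsubset : {ω | t < √((∑ i, Y i) ω) - s} ⊆ {ω | (s + t) ^ 2 ≤ (∑ i, Y i) ω} :=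
    fun ω hω ↦ ((lt_sqrt (by positivity)).mp (lt_sub_iff_add_lt'.mp hω)).le
  set l := t / (s + t)
  have hl : 0 ≤ l := by positivity
  have hl1 : l ≤ 1 := div_le_one_of_le₀ (by linarith) (by positivity)
  have hlst : l * (s + t) = t := div_mul_cancel_of_imp fun h ↦ by linarith
  have hexponent : -l * (s + t) ^ 2 + m * (l + l ^ 2) ≤ -t ^ 2 := calc
    -l * (s + t) ^ 2 + m * (l + l ^ 2) = -t ^ 2 - t ^ 2 * (l * (1 - l)) := by
      linear_combination (l * s - l * t - t) * hlst - (l + l ^ 2) * hm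
    _ ≤ -t ^ 2 := sub_le_self _ (mul_nonneg (sq_nonneg t) (mul_nonneg hl (sub_nonneg.mpr hl1)))
  calc P.real {ω | t < √((∑ i, Y i) ω) - s}
      ≤ P.real {ω | (s + t) ^ 2 ≤ (∑ i, Y i) ω} := measureReal_mono hsubset
    _ ≤ exp (-l * (s + t) ^ 2) * mgf (∑ i, Y i) P l :=
        measure_ge_le_exp_mul_mgf _ hl (integrable_exp_mul_sum hYm hY l)
    _ ≤ exp (-l * (s + t) ^ 2) * exp (m * (l + l ^ 2)) := by
        gcongr
        exact mgf_sum_le_exp hindep hYm hY (by rwa [abs_of_nonneg hl])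
    _ ≤ exp (-t ^ 2) := by rwa [← exp_add, exp_le_exp]

lemma measureReal_lt_sub_sqrt_sum_le (hindep : iIndepFun Y P) (hYm : ∀ i, AEMeasurable (Y i) P)
    (hY : ∀ i, ∀ᵐ ω ∂P, Y i ω ∈ Icc 0 1) (ht : 0 ≤ t) :
    P.real {ω | t < √(∑ i, ∫ ω, Y i ω ∂P) - √((∑ i, Y i) ω)} ≤ exp (-(t ^ 2 / 4)) := by
  set m := ∑ i, ∫ ω, Y i ω ∂P
  have hm : √m ^ 2 = m := sq_sqrt (sum_integral_nonneg hY)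
  set s := √m
  rcases le_or_gt s t with hst | hts
  · have hempty : {ω | t < s - √((∑ i, Y i) ω)} = ∅ :=
      eq_empty_of_forall_notMem fun ω (hω : t < s - _) ↦ by
        linarith [sqrt_nonneg ((∑ i, Y i) ω)]
    rw [hempty, measureReal_empty]
    positivity
  have hs : 0 < s := ht.trans_lt hts
  have hsubset : {ω | t < s - √((∑ i, Y i) ω)} ⊆ {ω | (∑ i, Y i) ω ≤ (s - t) ^ 2} :=
    fun ω hω ↦ ((sqrt_lt' (sub_pos.mpr hts)).mp (lt_sub_comm.mp hω)).le
  set l := t / (2 * s)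
  have hl : 0 ≤ l := by positivity
  have hl2 : l ≤ 1 / 2 := by
    rw [div_le_iff₀ (by positivity)]
    linarith
  have hls : l * (2 * s) = t := div_mul_cancel₀ t (by positivity)
  have hexponent : - -l * (s - t) ^ 2 + m * (-l + (-l) ^ 2) ≤ -(t ^ 2 / 4) := calc
    - -l * (s - t) ^ 2 + m * (-l + (-l) ^ 2) = -(t ^ 2 / 4) - t ^ 2 * (1 / 2 - l) := by
      linear_combination (l * s / 2 - 3 / 4 * t) * hls - (-l + l ^ 2) * hm
    _ ≤ -(t ^ 2 / 4) := sub_le_self _ (mul_nonneg (sq_nonneg t) (sub_nonneg.mpr hl2))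
  calc P.real {ω | t < s - √((∑ i, Y i) ω)}
      ≤ P.real {ω | (∑ i, Y i) ω ≤ (s - t) ^ 2} := measureReal_mono hsubset
    _ ≤ exp (- -l * (s - t) ^ 2) * mgf (∑ i, Y i) P (-l) :=
        measure_le_le_exp_mul_mgf _ (neg_nonpos.mpr hl) (integrable_exp_mul_sum hYm hY (-l))
    _ ≤ exp (- -l * (s - t) ^ 2) * exp (m * (-l + (-l) ^ 2)) := by
        gcongr
        exact mgf_sum_le_exp hindep hYm hY (by rw [abs_neg, abs_of_nonneg hl]; linarith)
    _ ≤ exp (-(t ^ 2 / 4)) := by rwa [← exp_add, exp_le_exp]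

lemma measureReal_lt_abs_sqrt_sum_sub_le (hindep : iIndepFun Y P)
    (hYm : ∀ i, AEMeasurable (Y i) P) (hY : ∀ i, ∀ᵐ ω ∂P, Y i ω ∈ Icc 0 1) (ht : 0 ≤ t) :
    P.real {ω | t < |√((∑ i, Y i) ω) - √(∑ i, ∫ ω, Y i ω ∂P)|} ≤ 2 * exp (-(t ^ 2 / 4)) := by
  simp only [lt_abs, neg_sub, ofPred_or]
  calc _ ≤ _ := measureReal_union_le _ _
    _ ≤ exp (-t ^ 2) + exp (-(t ^ 2 / 4)) :=
        add_le_add (measureReal_lt_sqrt_sum_sub_le hindep hYm hY ht)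
          (measureReal_lt_sub_sqrt_sum_le hindep hYm hY ht)
    _ ≤ 2 * exp (-(t ^ 2 / 4)) := by
        have : exp (-t ^ 2) ≤ exp (-(t ^ 2 / 4)) := exp_le_exp.mpr (by linarith [sq_nonneg t])
        linarith

end SqrtConcentration

section Sampling

variable {Ω : Type*} [MeasurableSpace Ω] {ρ : Measure Ω} [IsProbabilityMeasure ρ] {V t : ℝ}
  {n : ℕ}

lemma measureReal_lt_abs_empiricalNorm_sub_l2Norm_le [NeZero n] {h : Ω → ℝ} (hm : Measurable h)
    (hV : 0 < V) (hh : ∀ q, |h q| ≤ V) (ht : 0 ≤ t) :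
    (Measure.pi fun _ : Fin n ↦ ρ).real {D | t < |empiricalNorm D h - l2Norm ρ h|} ≤
      2 * exp (-(n * t ^ 2 / (4 * V ^ 2))) := by
  set P := Measure.pi fun _ : Fin n ↦ ρ
  let Y : Fin n → (Fin n → Ω) → ℝ := fun i D ↦ h (D i) ^ 2 / V ^ 2
  have hY : ∀ i D, Y i D ∈ Icc 0 1 := fun i D ↦
    ⟨by positivity, div_le_one_of_le₀ (sq_le_sq' (neg_le_of_abs_le (hh _)) (le_of_abs_le (hh _)))
      (by positivity)⟩
  have hindep : iIndepFun Y P :=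
    iIndepFun_pi (X := fun _ q ↦ h q ^ 2 / V ^ 2) fun _ ↦ by fun_prop
  have hn : (0 : ℝ) < n := Nat.cast_pos.mpr (NeZero.pos n)
  have hscale : 0 < √n / V := by positivity
  have hroot : ∀ x, √(n / V ^ 2 * x) = √n / V * √x := fun x ↦ by
    rw [sqrt_mul (by positivity), sqrt_div' _ (by positivity), sqrt_sq hV.le]
  have hsum : ∀ D, √((∑ i, Y i) D) = √n / V * empiricalNorm D h := fun D ↦ by
    rw [empiricalNorm, ← hroot, Finset.sum_apply, ← Finset.sum_div]
    field_simp
  have hmean : √(∑ i, ∫ D, Y i D ∂P) = √n / V * l2Norm ρ h := by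
    have hint : ∀ i, ∫ D, Y i D ∂P = (∫ q, h q ^ 2 ∂ρ) / V ^ 2 := fun i ↦ by
      rw [← integral_div]
      exact integral_comp_eval (μ := fun _ : Fin n ↦ ρ) (f := fun q ↦ h q ^ 2 / V ^ 2)
        (by fun_prop)
    rw [l2Norm, ← hroot, Finset.sum_congr rfl fun i _ ↦ hint i, Finset.sum_const,
      Finset.card_univ, Fintype.card_fin, nsmul_eq_mul, div_mul_eq_mul_div, mul_div_assoc']
  have hevent : {D | t < |empiricalNorm D h - l2Norm ρ h|} =
      {D | √n / V * t < |√((∑ i, Y i) D) - √(∑ i, ∫ D, Y i D ∂P)|} := by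
    ext D
    simp only [mem_ofPred_eq, hsum, hmean, ← mul_sub, abs_mul, abs_of_pos hscale,
      mul_lt_mul_iff_right₀ hscale]
  rw [hevent]
  convert measureReal_lt_abs_sqrt_sum_sub_le hindep (fun i ↦ by fun_prop)
    (fun i ↦ .of_forall (hY i)) (mul_nonneg hscale.le ht) using 4
  rw [mul_pow, div_pow, sq_sqrt n.cast_nonneg]
  ring

lemma measureReal_exists_lt_abs_empiricalNorm_sub_l2Norm_le [NeZero n] {κ : Type*} [Fintype κ]
    {h : κ → Ω → ℝ} (hm : ∀ k, Measurable (h k)) (hV : 0 < V) (hh : ∀ k q, |h k q| ≤ V)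
    (ht : 0 ≤ t) :
    (Measure.pi fun _ : Fin n ↦ ρ).real {D | ∃ k, t < |empiricalNorm D (h k) - l2Norm ρ (h k)|} ≤
      Fintype.card κ * (2 * exp (-(n * t ^ 2 / (4 * V ^ 2)))) := by
  rw [ofPred_exists, ← nsmul_eq_mul]
  exact (measureReal_iUnion_fintype_le _).trans <| Finset.sum_le_card_nsmul _ _ _ fun k _ ↦
    measureReal_lt_abs_empiricalNorm_sub_l2Norm_le (hm k) hV (hh k) ht

end Sampling

section Discretization

lemma exists_finset_net_Icc {a b η : ℝ} (hab : a ≤ b) (hη : 0 < η) :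
    ∃ N : Finset ℝ, ↑N ⊆ Icc a b ∧ (∀ x ∈ Icc a b, ∃ y ∈ N, |x - y| ≤ η) ∧
      (N.card : ℝ) ≤ (b - a) / η + 1 := by
  have hfloor : (⌊(b - a) / η⌋₊ : ℝ) ≤ (b - a) / η :=
    Nat.floor_le (div_nonneg (sub_nonneg.mpr hab) hη.le)
  refine ⟨(Finset.range (⌊(b - a) / η⌋₊ + 1)).image fun k : ℕ ↦ a + k * η, ?_, ?_, ?_⟩
  · intro y hy
    obtain ⟨k, hk, rfl⟩ := Finset.mem_image.mp (Finset.mem_coe.mp hy)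
    have hk : (k : ℝ) ≤ (b - a) / η :=
      (Nat.cast_le.mpr (Finset.mem_range_succ_iff.mp hk)).trans hfloor
    rw [le_div_iff₀ hη] at hk
    exact ⟨le_add_of_nonneg_right (by positivity), by linarith⟩
  · rintro x ⟨hax, hxb⟩
    refine ⟨a + ⌊(x - a) / η⌋₊ * η,
      Finset.mem_image_of_mem _ (Finset.mem_range_succ_iff.mpr ?_), ?_⟩
    · gcongr
    · have hle : (⌊(x - a) / η⌋₊ : ℝ) * η ≤ x - a :=
        (le_div_iff₀ hη).mp (Nat.floor_le (div_nonneg (sub_nonneg.mpr hax) hη.le))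
      have hlt : x - a < (⌊(x - a) / η⌋₊ + 1) * η := (div_lt_iff₀ hη).mp (Nat.lt_floor_add_one _)
      rw [abs_le]
      constructor <;> linarith
  · calc _ ≤ ((⌊(b - a) / η⌋₊ + 1 : ℕ) : ℝ) :=
          Nat.cast_le.mpr (Finset.card_image_le.trans_eq (Finset.card_range _))
      _ ≤ (b - a) / η + 1 := by
          push_cast
          linarith

variable {Ω X : Type*} {φ : Ω → X}

lemma exists_comp_rangeFactorization_near {N : Finset ℝ} {s : Set ℝ} {η : ℝ}
    (hN : ∀ x ∈ s, ∃ y ∈ N, |x - y| ≤ η) {g : Ω → ℝ} (hg : g.FactorsThrough φ)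
    (hgs : ∀ q, g q ∈ s) : ∃ k : range φ → N, ∀ q, |g q - k (rangeFactorization φ q)| ≤ η := by
  choose! r hrN hr using hN
  refine ⟨fun x ↦ ⟨r (g (rangeSplitting φ x)), hrN _ (hgs _)⟩, fun q ↦ ?_⟩
  have hsame : g (rangeSplitting φ (rangeFactorization φ q)) = g q := hg (apply_rangeSplitting φ _)
  simpa only [hsame] using hr _ (hgs q)

lemma measurable_of_factorsThrough [MeasurableSpace Ω] {β : Type*} [MeasurableSpace β] {g : Ω → β}
    (hφ : (range φ).Finite) (hfiber : ∀ x, MeasurableSet (φ ⁻¹' {x})) (hg : g.FactorsThrough φ) :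
    Measurable g := by
  intro U _
  have hpreimage : g ⁻¹' U = ⋃ x ∈ φ '' (g ⁻¹' U), φ ⁻¹' {x} := by
    ext q
    simp only [mem_iUnion, mem_preimage, mem_singleton_iff, exists_prop, exists_eq_right',
      mem_image]
    exact ⟨fun hq ↦ ⟨q, hq, rfl⟩, fun ⟨q', hq', hqq'⟩ ↦ hg hqq' ▸ hq'⟩
  rw [hpreimage]
  exact (hφ.subset (image_subset_range φ _)).measurableSet_biUnion fun x _ ↦ hfiber x

end Discretization

section UniformDeviation

variable {Ω X : Type*} [MeasurableSpace Ω] {ρ : Measure Ω} [IsProbabilityMeasure ρ] {φ : Ω → X}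
  {a b η t : ℝ} {n : ℕ}

lemma measureReal_exists_factorsThrough_lt_abs_le [NeZero n] (hφ : (range φ).Finite)
    (hcell : ∀ x, MeasurableSet (φ ⁻¹' {x})) {f : Ω → ℝ} (hfm : Measurable f)
    (hf : ∀ q, f q ∈ Icc a b) (hab : a < b) {N : Finset ℝ} (hNab : ↑N ⊆ Icc a b)
    (hN : ∀ x ∈ Icc a b, ∃ y ∈ N, |x - y| ≤ η) (ht : 0 ≤ t) :
    (Measure.pi fun _ : Fin n ↦ ρ).real {D | ∃ g : Ω → ℝ, g.FactorsThrough φ ∧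
        (∀ q, g q ∈ Icc a b) ∧ t + 2 * η < |empiricalNorm D (f - g) - l2Norm ρ (f - g)|} ≤
      N.card ^ Nat.card (range φ) * (2 * exp (-(n * t ^ 2 / (4 * (b - a) ^ 2)))) := by
  classical
  have : Fintype (range φ) := hφ.fintype
  let G (k : range φ → N) (q : Ω) : ℝ := k (rangeFactorization φ q)
  have hG : ∀ k q, G k q ∈ Icc a b := fun k q ↦ hNab (k _).2
  have hdist : ∀ g : Ω → ℝ, (∀ q, g q ∈ Icc a b) → ∀ q, |(f - g) q| ≤ b - a := fun g hg q ↦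
    abs_sub_le_of_le_of_le (hf q).1 (hf q).2 (hg q).1 (hg q).2
  have hmeas : ∀ g : Ω → ℝ, g.FactorsThrough φ → Measurable (f - g) := fun g hg ↦
    hfm.sub (measurable_of_factorsThrough hφ hcell hg)
  have hGm : ∀ k, Measurable (f - G k) := fun k ↦ hmeas _ fun q q' h ↦
    congrArg (fun x ↦ (k x : ℝ)) (Subtype.ext h)
  have hL2 : ∀ g : Ω → ℝ, (∀ q, g q ∈ Icc a b) → Measurable (f - g) → MemLp (f - g) 2 ρ :=
    fun g hg hm ↦ .of_bound hm.aestronglyMeasurable (b - a) (.of_forall (hdist g hg))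
  refine (measureReal_mono ?_).trans <|
    (measureReal_exists_lt_abs_empiricalNorm_sub_l2Norm_le hGm (sub_pos.mpr hab)
      (fun k ↦ hdist (G k) (hG k)) ht).trans_eq (by simp [Nat.card_eq_fintype_card])
  rintro D ⟨g, hgφ, hg, hD⟩
  obtain ⟨k, hk⟩ := exists_comp_rangeFactorization_near hN hgφ hg
  have hnear : ∀ q, |(f - g) q - (f - G k) q| ≤ η := fun q ↦ by
    simpa [G, abs_sub_comm] using hk q
  have htransfer := abs_empiricalNorm_sub_l2Norm_le_add D (hL2 g hg (hmeas g hgφ))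
    (hL2 (G k) (hG k) (hGm k)) hnear
  exact ⟨k, by linarith⟩

end UniformDeviation

lemma ofReal_one_sub_le_measure {Ω : Type*} [MeasurableSpace Ω] {P : Measure Ω}
    [IsProbabilityMeasure P] {E : Set Ω} {p : ℝ} (hE : P.real Eᶜ ≤ p) :
    ENNReal.ofReal (1 - p) ≤ P E := by
  -- Subadditivity, since `E` need not be measurable: the event of the theorem is an
  -- uncountable intersection.
  have hcover : 1 ≤ P.real E + P.real Eᶜ := by
    simpa using measureReal_union_le (μ := P) E Eᶜ
  have hle : 1 - p ≤ P.real E := by linarith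
  exact ENNReal.ofReal_le_of_le_toReal hle

section SampleSize

variable {V ε δ : ℝ}

lemma log_sample_size_pos (hε : 0 < ε) (hεV : ε ≤ V) (hδ : 0 < δ) (hδ2 : δ ≤ 2) :
    0 < log (80 * V / (ε * δ)) := by
  refine log_pos ((one_lt_div (by positivity)).mpr ?_)
  calc ε * δ ≤ V * 2 := mul_le_mul hεV hδ2 hδ.le (hε.le.trans hεV)
    _ < 80 * V := by linarith

lemma sample_size_ne_zero (hε : 0 < ε) (hεV : ε ≤ V) (hδ : 0 < δ) (hδ2 : δ ≤ 2) {K n : ℕ}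
    (hK : K ≠ 0) (hn : 50 * V ^ 2 * K * log (80 * V / (ε * δ)) / ε ^ 2 ≤ n) : n ≠ 0 := by
  have hV : 0 < V := hε.trans_le hεV
  have hlog := log_sample_size_pos hε hεV hδ hδ2
  have hpos : (0 : ℝ) < n := lt_of_lt_of_le (by positivity) hn
  exact Nat.cast_ne_zero.mp hpos.ne'

lemma pow_mul_two_exp_le_of_sample_size (hε : 0 < ε) (hεV : ε ≤ V) (hδ : 0 < δ)
    (hδ2 : δ ≤ 2) {K n N : ℕ} (hK : K ≠ 0) (hN : (N : ℝ) ≤ 5 * V / ε)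
    (hn : 50 * V ^ 2 * K * log (80 * V / (ε * δ)) / ε ^ 2 ≤ n) :
    (N : ℝ) ^ K * (2 * exp (-(n * (ε / 2) ^ 2 / (4 * V ^ 2)))) ≤ δ / 2 := by
  have hV : 0 < V := hε.trans_le hεV
  set L := log (80 * V / (ε * δ)) with hLdef
  have hL : 0 ≤ L := (log_sample_size_pos hε hεV hδ hδ2).le
  have hexponent : K * L ≤ n * (ε / 2) ^ 2 / (4 * V ^ 2) := calc
    K * L ≤ 50 / 16 * (K * L) := le_mul_of_one_le_left (by positivity) (by norm_num)
    _ = 50 * V ^ 2 * K * L / ε ^ 2 * ((ε / 2) ^ 2 / (4 * V ^ 2)) := by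
        field_simp
        ring
    _ ≤ n * ((ε / 2) ^ 2 / (4 * V ^ 2)) := by gcongr
    _ = _ := mul_div_assoc' _ _ _
  have hexpL : exp (-L) = ε * δ / (80 * V) := by
    rw [exp_neg, hLdef, exp_log (by positivity), inv_div]
  have hNexp : N * exp (-L) ≤ δ / 16 := calc
    N * exp (-L) ≤ 5 * V / ε * (ε * δ / (80 * V)) := by
        rw [hexpL]
        gcongr
    _ = δ / 16 := by
        field_simp
        norm_num
  calc (N : ℝ) ^ K * (2 * exp (-(n * (ε / 2) ^ 2 / (4 * V ^ 2))))
      ≤ (N : ℝ) ^ K * (2 * exp (-(K * L))) := by gcongr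
    _ = 2 * (N * exp (-L)) ^ K := by
        rw [mul_pow, ← exp_nat_mul, mul_neg]
        ring
    _ ≤ 2 * (N * exp (-L)) := by
        gcongr
        exact pow_le_of_le_one (by positivity) (by linarith) hK
    _ ≤ δ / 2 := by linarith

end SampleSize

lemma integral_eq_sum_of_measure_singleton {Ω : Type*} [Fintype Ω] [MeasurableSpace Ω]
    [MeasurableSingletonClass Ω] {ρ : Measure Ω} [IsFiniteMeasure ρ] {μ : Ω → ℝ}
    (hμ : ∀ q, 0 ≤ μ q) (hρ : ∀ q, ρ {q} = ENNReal.ofReal (μ q)) (f : Ω → ℝ) :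
    ∫ q, f q ∂ρ = ∑ q, μ q * f q := by
  simp only [integral_fintype Integrable.of_finite, measureReal_def, hρ, smul_eq_mul,
    ENNReal.toReal_ofReal (hμ _)]

end UniformConcentration

open UniformConcentration in
theorem stmt11_general {S A X : Type*} [MeasurableSpace S] [MeasurableSpace A]
    (Vmax : ℝ) (φ : S × A → X) (hφ : (Set.range φ).Finite)
    (hcell : ∀ x, MeasurableSet (φ ⁻¹' {x}))
    (f₀ : S × A → ℝ) (hf₀m : Measurable f₀) (hf₀ : ∀ q, 0 ≤ f₀ q ∧ f₀ q ≤ Vmax)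
    (δ ε₁ : ℝ) (hδ : 0 < δ) (hε₁ : 0 < ε₁) (hε₁V : ε₁ ≤ Vmax)
    (ρ : Measure (S × A)) [IsProbabilityMeasure ρ] (n : ℕ)
    (hn : (n : ℝ) ≥ 50 * Vmax ^ 2 * (Nat.card (Set.range φ) : ℝ) *
        Real.log (80 * Vmax / (ε₁ * δ)) / ε₁ ^ 2) :
    (Measure.pi fun _ : Fin n => ρ)
      {D : Fin n → S × A |
        ∀ g : S × A → ℝ, (∀ q, 0 ≤ g q ∧ g q ≤ Vmax) → PiecewiseConst φ g →
          |Real.sqrt ((1 / (n : ℝ)) * ∑ i : Fin n, (f₀ (D i) - g (D i)) ^ 2)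
            - Real.sqrt (∫ q, (f₀ q - g q) ^ 2 ∂ρ)| ≤ ε₁}
      ≥ ENNReal.ofReal (1 - δ / 2) := by
  rcases lt_or_ge 2 δ with hδ2 | hδ2
  · simp [ENNReal.ofReal_of_nonpos (show 1 - δ / 2 ≤ 0 by linarith)]
  have hcells : Nat.card (Set.range φ) ≠ 0 := by
    have := nonempty_of_isProbabilityMeasure ρ
    have := hφ.to_subtype
    exact Nat.card_pos.ne'
  have : NeZero n := ⟨sample_size_ne_zero hε₁ hε₁V hδ hδ2 hcells hn⟩
  obtain ⟨N, hNV, hN, hNcard⟩ :=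
    exists_finset_net_Icc (hε₁.le.trans hε₁V) (show 0 < ε₁ / 4 by positivity)
  have hNcard' : (N.card : ℝ) ≤ 5 * Vmax / ε₁ := hNcard.trans <| by
    field_simp
    linarith
  have hdeviation := (measureReal_exists_factorsThrough_lt_abs_le (ρ := ρ) (n := n) hφ hcell hf₀m
    hf₀ (hε₁.trans_le hε₁V) hNV hN (half_pos hε₁).le).trans
      (by simpa using pow_mul_two_exp_le_of_sample_size hε₁ hε₁V hδ hδ2 hcells hNcard' hn)
  refine ofReal_one_sub_le_measure ((measureReal_mono ?_).trans hdeviation)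
  intro D hD
  simp only [Set.mem_compl_iff, Set.mem_ofPred_eq, not_forall, not_le] at hD
  obtain ⟨g, hg, hgφ, hlt⟩ := hD
  exact ⟨g, hgφ, hg, lt_of_eq_of_lt (by ring) hlt⟩

/-- (Uniform concentration of empirical distances.)  With `n`
i.i.d. draws from `μ` and `n ≥ 50 V_max² |φ| ln(80 V_max/(ε₁ δ)) / ε₁²`, with
probability at least `1 − δ/2`, simultaneously for every `g : S × A → [0, V_max]`
piecewise constant with respect to `φ`,
`|‖f₀ − g‖_{2,D} − ‖f₀ − g‖_{2,μ}| ≤ ε₁`. -/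
theorem stmt11 {S A X : Type*} [Fintype S] [Fintype A] [Nonempty S] [Nonempty A]
    [MeasurableSpace S] [MeasurableSingletonClass S]
    [MeasurableSpace A] [MeasurableSingletonClass A]
    (Vmax : ℝ) (hVmax : 0 < Vmax)
    (μ : S × A → ℝ) (hμpos : ∀ q, 0 < μ q) (hμsum : ∑ q, μ q = 1)
    (φ : S × A → X)
    (f₀ : S × A → ℝ) (hf₀ : ∀ q, 0 ≤ f₀ q ∧ f₀ q ≤ Vmax)
    (δ ε₁ : ℝ) (hδ : 0 < δ) (hδ1 : δ < 1) (hε₁ : 0 < ε₁) (hε₁V : ε₁ ≤ Vmax)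
    -- `ρ` is the law of a single draw `(s,a) ∼ μ`
    (ρ : Measure (S × A)) [IsProbabilityMeasure ρ]
    (hρ : ∀ q : S × A, ρ {q} = ENNReal.ofReal (μ q))
    (n : ℕ)
    -- sample-size requirement
    (hn : (n : ℝ) ≥ 50 * Vmax ^ 2 * (Nat.card (Set.range φ) : ℝ) *
        Real.log (80 * Vmax / (ε₁ * δ)) / ε₁ ^ 2) :
    (Measure.pi fun _ : Fin n => ρ)
      {D : Fin n → S × A |
        ∀ g : S × A → ℝ, (∀ q, 0 ≤ g q ∧ g q ≤ Vmax) → PiecewiseConst φ g →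
          |Real.sqrt ((1 / (n : ℝ)) * ∑ i : Fin n, (f₀ (D i) - g (D i)) ^ 2)
            - Real.sqrt (∑ q : S × A, μ q * (f₀ q - g q) ^ 2)| ≤ ε₁}
      ≥ ENNReal.ofReal (1 - δ / 2) := by
  simpa only [UniformConcentration.integral_eq_sum_of_measure_singleton (fun q ↦ (hμpos q).le) hρ]
    using stmt11_general Vmax φ (Set.toFinite _) (fun _ ↦ (Set.toFinite _).measurableSet) f₀
      (measurable_of_finite f₀) hf₀ δ ε₁ hδ hε₁ hε₁V ρ n hn
end
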